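/- arXiv:1604.04045 — 2 statements merged into one kernel-verified Lean document; each statement's English description precedes it below -/
import Mathlib

section
/- Let G be a semi-2-tree on n vertices with skeleton T, b blocks, and let r be a simplicial vertex or cut-vertex of G. Then π_t(G,r) = π_t(T,r) + (n−1) + b − 2e(T), where e(T) is the number of edges of T and π_t(T,r) is the t-pebbling number of the rooted tree (T,r). -/
open SimpleGraph

/-- A single pebbling step: remove two pebbles from `u`, add one to a neighbor `v`. -/
def PebStep {V : Type} (G : SimpleGraph V) (C C' : V → ℕ) : Prop :=
  ∃ u v : V, G.Adj u v ∧ 2 ≤ C u ∧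
    C' u + 2 = C u ∧ C' v = C v + 1 ∧ ∀ w, w ≠ u → w ≠ v → C' w = C w

/-- `C` is `t`-fold `r`-solvable. -/
def TSolvable {V : Type} (G : SimpleGraph V) (C : V → ℕ) (r : V) (t : ℕ) : Prop :=
  ∃ C', Relation.ReflTransGen (PebStep G) C C' ∧ t ≤ C' r

/-- The `t`-pebbling number of `G` rooted at `r`. -/
noncomputable def piT {V : Type} (G : SimpleGraph V) (r : V) (t : ℕ) : ℕ :=
  sInf {s | ∀ C : V → ℕ, s ≤ ∑ᶠ v, C v → TSolvable G C r t}

/-- The pebbling number of `G` rooted at `r`. -/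
noncomputable def pin {V : Type} (G : SimpleGraph V) (r : V) : ℕ := piT G r 1

/-- The `t`-pebbling number of `G`. -/
noncomputable def piGt {V : Type} (G : SimpleGraph V) (t : ℕ) : ℕ := ⨆ r, piT G r t

/-- The pebbling number of `G`. -/
noncomputable def piG {V : Type} (G : SimpleGraph V) : ℕ := ⨆ r, pin G r

/-- Eccentricity of `r`. -/
noncomputable def eccG {V : Type} (G : SimpleGraph V) (r : V) : ℕ := ⨆ v, G.dist r v

/-- Diameter of `G`. -/
noncomputable def diamG {V : Type} (G : SimpleGraph V) : ℕ := ⨆ u, eccG G u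

/-- `G` is a 2-tree: either `K₂` or obtained by adding a 2-simplicial vertex to a
2-tree. -/
inductive IsTwoTree : {V : Type} → SimpleGraph V → Prop
  | base {V : Type} (G : SimpleGraph V) (e : V ≃ Fin 2)
      (h : ∀ a b : V, G.Adj a b ↔ a ≠ b) : IsTwoTree G
  | extend {V : Type} (G : SimpleGraph V) (v : V)
      (hdeg : (G.neighborSet v).ncard = 2)
      (hcl : G.IsClique (G.neighborSet v))
      (h : IsTwoTree (G.induce {u | u ≠ v})) : IsTwoTree G

/-- A simplicial vertex: its neighborhood is a clique. -/
def IsSimplicial {V : Type} (G : SimpleGraph V) (v : V) : Prop :=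
  G.IsClique (G.neighborSet v)

/-- A 2-path: a 2-tree with exactly two simplicial vertices. -/
def IsTwoPath {V : Type} (G : SimpleGraph V) : Prop :=
  IsTwoTree G ∧ {v | IsSimplicial G v}.ncard = 2

/-- The edges of the `i`-th fan of a fan decomposition with spine `x` and fan
vertices `v i 1, …, v i (k i)`. -/
def FanEdge {V : Type} (x : ℕ → V) (k : ℕ → ℕ) (v : ℕ → ℕ → V) (i : ℕ)
    (a b : V) : Prop :=
  s(a, b) = s(x (i - 1), x i) ∨ s(a, b) = s(x i, x (i + 1)) ∨
  s(a, b) = s(x (i - 1), v i 1) ∨ s(a, b) = s(v i (k i), x (i + 1)) ∨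
  (∃ j, 1 ≤ j ∧ j < k i ∧ s(a, b) = s(v i j, v i (j + 1))) ∨
  (∃ j, 1 ≤ j ∧ j ≤ k i ∧ s(a, b) = s(x i, v i j))

/-- The set of fan vertices of the `i`-th fan. -/
def FanVerts {V : Type} (k : ℕ → ℕ) (v : ℕ → ℕ → V) (i : ℕ) : Set V :=
  {w | ∃ j, 1 ≤ j ∧ j ≤ k i ∧ w = v i j}

/-- `FanData G d x k v` : the data `(x, k, v)` exhibits `G` as an overlapping fan
graph of diameter `d` with spine `x 0, x 1, …, x d` and, for `1 ≤ i ≤ d − 1`, an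
`x_{i−1}x_{i+1}`-fan centered on `x i` with fan vertices `v i 1, …, v i (k i)`;
consecutive fans are opposite-sided or same-sided, and `G` is the union of the
fans. -/
def FanData {V : Type} (G : SimpleGraph V) (d : ℕ) (x : ℕ → V) (k : ℕ → ℕ)
    (v : ℕ → ℕ → V) : Prop :=
  2 ≤ d ∧
  -- the spine is a shortest path between two vertices realizing the diameter
  (∀ u w : V, G.dist u w ≤ d) ∧ G.dist (x 0) (x d) = d ∧
  (∀ i < d, G.Adj (x i) (x (i + 1))) ∧
  (∀ i ≤ d, ∀ l ≤ d, x i = x l → i = l) ∧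
  -- fan structure
  (∀ i, 1 ≤ i → i ≤ d - 1 →
    1 ≤ k i ∧
    G.Adj (x (i - 1)) (v i 1) ∧
    (∀ j, 1 ≤ j → j < k i → G.Adj (v i j) (v i (j + 1))) ∧
    G.Adj (v i (k i)) (x (i + 1)) ∧
    (∀ j, 1 ≤ j → j ≤ k i → G.Adj (x i) (v i j)) ∧
    (∀ j, 1 ≤ j → j ≤ k i → ∀ j', 1 ≤ j' → j' ≤ k i → v i j = v i j' → j = j') ∧
    (∀ j, 1 ≤ j → j ≤ k i → ∀ l ≤ d, v i j ≠ x l)) ∧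
  -- consecutive fans are opposite-sided or same-sided
  (∀ i, 1 ≤ i → i + 1 ≤ d - 1 →
    (FanVerts k v i ∩ FanVerts k v (i + 1) = ∅) ∨
    (v i (k i) = v (i + 1) 1 ∧
      FanVerts k v i ∩ FanVerts k v (i + 1) = {v i (k i)})) ∧
  -- G is the union of the fans: vertices
  (∀ u : V, (∃ l ≤ d, u = x l) ∨
    ∃ i, 1 ≤ i ∧ i ≤ d - 1 ∧ u ∈ FanVerts k v i) ∧
  -- G is the union of the fans: edges
  (∀ a b : V, G.Adj a b → ∃ i, 1 ≤ i ∧ i ≤ d - 1 ∧ FanEdge x k v i a b)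

/-- `G` is an overlapping fan graph. -/
def IsOverlappingFan {V : Type} (G : SimpleGraph V) : Prop :=
  ∃ (d : ℕ) (x : ℕ → V) (k : ℕ → ℕ) (v : ℕ → ℕ → V), FanData G d x k v

/-- Two edges lie in a common block: they are equal or lie on a common cycle. -/
def SameBlockEdge {V : Type} (G : SimpleGraph V) (e₁ e₂ : Sym2 V) : Prop :=
  e₁ = e₂ ∨ ∃ (u : V) (c : G.Walk u u), c.IsCycle ∧ e₁ ∈ c.edges ∧ e₂ ∈ c.edges

/-- `B` is (the vertex set of) a block of `G`: the union of the endpoints of an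
equivalence class of edges under `SameBlockEdge`. -/
def IsBlockOf {V : Type} (G : SimpleGraph V) (B : Set V) : Prop :=
  ∃ e₀ ∈ G.edgeSet, B = {w | ∃ e ∈ G.edgeSet, SameBlockEdge G e₀ e ∧ w ∈ e}

/-- `v` is a cut-vertex of `G`. -/
def IsCutVertex {V : Type} (G : SimpleGraph V) (v : V) : Prop :=
  G.Connected ∧ ¬ (G.induce {u | u ≠ v}).Connected

/-- `G` is a semi-2-tree: connected, every block is a 2-path, and every cut-vertex
is simplicial in every block containing it. -/
def IsSemiTwoTree {V : Type} (G : SimpleGraph V) : Prop :=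
  G.Connected ∧
  (∀ B : Set V, IsBlockOf G B → IsTwoPath (G.induce B)) ∧
  (∀ v : V, IsCutVertex G v → ∀ B : Set V, IsBlockOf G B →
    ∀ h : v ∈ B, IsSimplicial (G.induce B) ⟨v, h⟩)

/-- `E` is the edge set of a spine of the block `B`: a shortest path between the two
simplicial vertices of the 2-path induced on `B`, realizing its diameter. -/
def IsSpineOf {V : Type} (G : SimpleGraph V) (B : Set V) (E : Set (Sym2 V)) : Prop :=
  ∃ (s₁ s₂ : ↥B) (p : (G.induce B).Walk s₁ s₂),
    s₁ ≠ s₂ ∧ IsSimplicial (G.induce B) s₁ ∧ IsSimplicial (G.induce B) s₂ ∧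
    p.IsPath ∧ p.length = (G.induce B).dist s₁ s₂ ∧
    (∀ a b : ↥B, (G.induce B).dist a b ≤ p.length) ∧
    E = (fun e => Sym2.map Subtype.val e) '' {e | e ∈ p.edges}

/-- `T` is a skeleton of the semi-2-tree `G`: the union of spines of its blocks. -/
def IsSkeleton {V : Type} (G T : SimpleGraph V) : Prop :=
  T ≤ G ∧ ∃ S : Set V → Set (Sym2 V),
    (∀ B : Set V, IsBlockOf G B → IsSpineOf G B (S B)) ∧
    T.edgeSet = ⋃ B ∈ {B : Set V | IsBlockOf G B}, S B

/-!
Only the net balance of pebbling moves at each vertex matters, so a configuration can place `t`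
pebbles on the root iff there is a flow of moves doing so. Such a flow through a cut-vertex `x`
splits into a flow of the part beyond `x` towards `x` and one of the part containing the root, so
what is beyond `x` acts only through the largest number of pebbles that it can bring to `x`.

A 2-path `B` with simplicial vertices `x` and `s` consists of layers around a spine. Towards `x` it
behaves like the spine, except that `|B| - 2 d` pebbles, where `d` is the distance of `x` and `s`,
may be wasted: any configuration on `B` can be exchanged with one on the spine, and conversely, at
this price. Every cut-vertex in `B` is `x` or `s`, so exchanging one block after the other turns
pebbling on `G` into pebbling on the skeleton. The prices add up to `(n - 1) + b - 2 e(T)`, because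
attaching `B` at `x` adds `|B| - 1` vertices, one block and `d` edges of the skeleton.
-/

/-! ### Flows of pebbling moves -/

theorem single_le_iff_le_apply {V : Type*} [DecidableEq V] {C : V → ℕ} {u : V} {m : ℕ} :
    Pi.single u m ≤ C ↔ m ≤ C u := by
  simp +contextual [Pi.single, update_le_iff]

theorem exists_eq_add_single {V : Type*} [DecidableEq V] {C : V → ℕ} {u : V} {m : ℕ}
    (h : m ≤ C u) : ∃ E : V → ℕ, C = E + Pi.single u m :=
  ⟨C - Pi.single u m, (tsub_add_cancel_of_le (single_le_iff_le_apply.2 h)).symm⟩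

section Flow

variable {V : Type*} [Fintype V] {G H : SimpleGraph V} {f : V → V → ℕ} {C C' D D' E : V → ℕ}

/-- `f u v` moves from `u` to `v` along the edges of `G` leave at least `D` of the configuration
`C`. Only the net balance at each vertex matters, not whether the moves can be put in order. -/
structure IsFlow (G : SimpleGraph V) (f : V → V → ℕ) (C D : V → ℕ) : Prop where
  adj : ∀ u v, f u v ≠ 0 → G.Adj u v
  balance : ∀ v, 2 * ∑ w, f v w + D v ≤ C v + ∑ u, f u v

/-- The configuration `D` can be extracted from `C` by a flow of pebbling moves. -/
def FlowReach (G : SimpleGraph V) (C D : V → ℕ) : Prop :=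
  ∃ f, IsFlow G f C D

theorem sum_mul_le_sum_mul_of_ne_zero {g y : V → ℕ} {c : ℕ} (h : ∀ v, g v ≠ 0 → y v ≤ c) :
    ∑ v, g v * y v ≤ (∑ v, g v) * c := by
  rw [Finset.sum_mul]
  refine Finset.sum_le_sum fun v _ => ?_
  rcases eq_or_ne (g v) 0 with hv | hv
  · simp [hv]
  · exact Nat.mul_le_mul_left _ (h v hv)

theorem sum_single_single_left [DecidableEq V] (u v w : V) (m : ℕ) :
    ∑ b, (Pi.single u (Pi.single v m) : V → V → ℕ) w b = (Pi.single u m : V → ℕ) w := by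
  obtain rfl | hw := eq_or_ne w u <;> simp [*]

theorem sum_single_single_right [DecidableEq V] (u v w : V) (m : ℕ) :
    ∑ a, (Pi.single u (Pi.single v m) : V → V → ℕ) a w = (Pi.single v m : V → ℕ) w := by
  simp [Pi.single_apply, ite_apply]

namespace IsFlow

theorem le_of_blocked (hf : IsFlow G f C D) (hblocked : ∀ u, 2 ≤ C u → ∑ v, f u v = 0) :
    D ≤ C := by
  have out_le_in : ∀ u, ∑ v, f u v ≤ ∑ v, f v u := fun u => by
    have := hf.balance u
    have := hblocked u
    omega
  have out_eq_in : ∀ u ∈ Finset.univ, ∑ v, f u v = ∑ v, f v u :=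
    (Finset.sum_eq_sum_iff_of_le fun u _ => out_le_in u).1 Finset.sum_comm
  refine fun v => ?_
  have := hf.balance v
  have := out_eq_in v (Finset.mem_univ v)
  change D v ≤ C v
  omega

theorem sub_single [DecidableEq V] {u v : V} (hf : IsFlow G f (C + Pi.single u 2) D)
    (huv : f u v ≠ 0) :
    ∃ f', f = f' + Pi.single u (Pi.single v 1) ∧ IsFlow G f' (C + Pi.single v 1) D := by
  have hle : Pi.single u (Pi.single v 1) ≤ f := by
    intro a b
    obtain rfl | ha := eq_or_ne a u
    · obtain rfl | hb := eq_or_ne b v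
      · simpa using Nat.one_le_iff_ne_zero.2 huv
      · simp [hb]
    · simp [ha]
  obtain ⟨f', rfl⟩ : ∃ f', f = f' + Pi.single u (Pi.single v 1) :=
    ⟨f - Pi.single u (Pi.single v 1), (tsub_add_cancel_of_le hle).symm⟩
  refine ⟨f', rfl, fun a b hab => hf.adj a b (by simp [hab]), fun w => ?_⟩
  have := hf.balance w
  simp only [Pi.add_apply, Finset.sum_add_distrib, sum_single_single_left,
    sum_single_single_right] at this ⊢
  obtain rfl | hw := eq_or_ne w u
  · simp only [Pi.single_eq_same] at this
    omega
  · simp only [Pi.single_eq_of_ne hw] at this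
    omega

theorem sum_mul_add_le {y : V → ℕ} {u : V} (hf : IsFlow G f C D)
    (hy : ∀ v, G.Adj u v → y v ≤ 2 * y u) :
    ∑ v, f u v * y v + D u * y u ≤ C u * y u + (∑ v, f v u) * y u :=
  calc ∑ v, f u v * y v + D u * y u
      ≤ (∑ v, f u v) * (2 * y u) + D u * y u := by
        gcongr
        exact sum_mul_le_sum_mul_of_ne_zero fun v hv => hy v (hf.adj u v hv)
    _ = (2 * ∑ v, f u v + D u) * y u := by ring
    _ ≤ (C u + ∑ v, f v u) * y u := by exact Nat.mul_le_mul_right _ (hf.balance u)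
    _ = C u * y u + (∑ v, f v u) * y u := add_mul ..

-- `2 * out ≤ 1 + in` forces `out ≤ in`.
theorem sum_mul_le_of_le_one {y : V → ℕ} {u : V} (hf : IsFlow G f C D) (hC : C u ≤ 1)
    (hy : ∀ v, G.Adj u v → y v ≤ y u) :
    ∑ v, f u v * y v ≤ (∑ v, f v u) * y u := by
  have out_le_in : ∑ v, f u v ≤ ∑ v, f v u := by
    have := hf.balance u
    omega
  exact (sum_mul_le_sum_mul_of_ne_zero fun v hv => hy v (hf.adj u v hv)).trans
    (Nat.mul_le_mul_right _ out_le_in)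

end IsFlow

namespace FlowReach

theorem of_le (h : D ≤ C) : FlowReach G C D :=
  ⟨0, by simp, fun v => by simpa using h v⟩

theorem add (h : FlowReach G C D) (h' : FlowReach G C' D') :
    FlowReach G (C + C') (D + D') := by
  obtain ⟨f, hf⟩ := h
  obtain ⟨g, hg⟩ := h'
  refine ⟨f + g, fun u v huv => ?_, fun v => ?_⟩
  · by_cases h0 : f u v = 0
    · exact hg.adj u v (by simpa [h0] using huv)
    · exact hf.adj u v h0
  · have := hf.balance v
    have := hg.balance v
    simp only [Finset.sum_add_distrib, Pi.add_apply]
    omega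

theorem trans (h : FlowReach G C D) (h' : FlowReach G D E) : FlowReach G C E := by
  obtain ⟨f, hf⟩ := h.add h'
  refine ⟨f, hf.adj, fun v => ?_⟩
  have := hf.balance v
  simp only [Pi.add_apply] at this
  omega

theorem mono (h : FlowReach G C D) (hC : C ≤ C') (hD : D' ≤ D) : FlowReach G C' D' :=
  ((of_le hC).trans h).trans (of_le hD)

theorem mono_graph (hGH : G ≤ H) : FlowReach G C D → FlowReach H C D :=
  fun ⟨f, hf⟩ => ⟨f, fun u v huv => hGH (hf.adj u v huv), hf.balance⟩

theorem of_adj [DecidableEq V] {u v : V} (huv : G.Adj u v) (m : ℕ) :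
    FlowReach G (Pi.single u (2 * m)) (Pi.single v m) := by
  refine ⟨Pi.single u (Pi.single v m), fun a b hab => ?_, fun w => ?_⟩
  · obtain rfl : a = u := by by_contra ha; simp [ha] at hab
    obtain rfl : b = v := by by_contra hb; simp [hb] at hab
    exact huv
  · rw [sum_single_single_left, sum_single_single_right]
    obtain rfl | hw := eq_or_ne w u <;> simp [*]

theorem of_walk [DecidableEq V] {u v : V} (p : G.Walk u v) (m : ℕ) :
    FlowReach G (Pi.single u (m * 2 ^ p.length)) (Pi.single v m) := by
  induction p with
  | nil => exact of_le (by simp)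
  | cons h p ih =>
    rw [Walk.length_cons, pow_succ', mul_left_comm]
    exact (of_adj h _).trans ih

/-- Vertices of `A`, carrying at most one pebble each, can only relay pebbles, so along them the
weight need not be allowed to double. -/
theorem sum_mul_le [DecidableEq V] {A : Finset V} {y : V → ℕ} (h : FlowReach G C D)
    (hC : ∀ u ∈ A, C u ≤ 1)
    (hy : ∀ u v, G.Adj u v → u ∉ A → y v ≤ 2 * y u)
    (hyA : ∀ u v, G.Adj u v → u ∈ A → y v ≤ y u) :
    ∑ u ∈ Aᶜ, D u * y u ≤ ∑ u ∈ Aᶜ, C u * y u := by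
  obtain ⟨f, hf⟩ := h
  have off : ∑ u ∈ Aᶜ, (∑ v, f u v * y v + D u * y u) ≤
      ∑ u ∈ Aᶜ, (C u * y u + (∑ v, f v u) * y u) :=
    Finset.sum_le_sum fun u hu => hf.sum_mul_add_le fun v huv =>
      hy u v huv (Finset.mem_compl.1 hu)
  have on : ∑ u ∈ A, ∑ v, f u v * y v ≤ ∑ u ∈ A, (∑ v, f v u) * y u :=
    Finset.sum_le_sum fun u hu => hf.sum_mul_le_of_le_one (hC u hu) fun v huv => hyA u v huv hu
  have double_count : ∑ u, ∑ v, f u v * y v = ∑ u, (∑ v, f v u) * y u := by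
    simp only [Finset.sum_mul]
    exact Finset.sum_comm
  rw [← Finset.sum_add_sum_compl A, ← Finset.sum_add_sum_compl A] at double_count
  simp only [Finset.sum_add_distrib] at off
  omega

theorem le_sum [DecidableEq V] {x : V} {k : ℕ} (h : FlowReach G C (Pi.single x k)) :
    k ≤ ∑ v, C v := by
  simpa using h.sum_mul_le (A := ∅) (y := fun _ => 1) (by simp) (by simp) (by simp)

theorem exists_forall_iff_le [DecidableEq V] (G : SimpleGraph V) (C : V → ℕ) (x : V) :
    ∃ k, ∀ t, FlowReach G C (Pi.single x t) ↔ t ≤ k := by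
  classical
  let P : ℕ → Prop := fun k => FlowReach G C (Pi.single x k)
  have hP : P (Nat.findGreatest P (∑ v, C v)) :=
    Nat.findGreatest_spec (Nat.zero_le _) (of_le (by simp))
  exact ⟨_, fun t => ⟨fun h => Nat.le_findGreatest h.le_sum h,
    fun h => hP.mono le_rfl (Pi.single_le_single.2 h)⟩⟩

end FlowReach

end Flow

section PebbleStep

variable {V : Type} {G : SimpleGraph V} {C C' D : V → ℕ}

theorem pebStep_iff_exists_single [DecidableEq V] : PebStep G C C' ↔
    ∃ (u v : V) (E : V → ℕ), G.Adj u v ∧ C = E + Pi.single u 2 ∧ C' = E + Pi.single v 1 := by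
  constructor
  · rintro ⟨u, v, huv, h2, hu, hv, hC'⟩
    obtain ⟨E, rfl⟩ := exists_eq_add_single h2
    refine ⟨u, v, E, huv, rfl, funext fun w => ?_⟩
    obtain rfl | hwu := eq_or_ne w u
    · simpa [huv.ne] using hu
    obtain rfl | hwv := eq_or_ne w v
    · simpa [hwu] using hv
    · simpa [hwu, hwv] using hC' w hwu hwv
  · rintro ⟨u, v, E, huv, rfl, rfl⟩
    refine ⟨u, v, huv, ?_, ?_, ?_, fun w hwu hwv => ?_⟩
    · simp
    · simp [huv.ne]
    · simp [huv.ne']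
    · simp [hwu, hwv]

variable [Fintype V]

theorem FlowReach.of_reflTransGen (h : Relation.ReflTransGen (PebStep G) C C') :
    FlowReach G C C' := by
  classical
  induction h with
  | refl => exact .of_le le_rfl
  | tail _ hstep ih =>
    obtain ⟨u, v, E, huv, rfl, rfl⟩ := pebStep_iff_exists_single.1 hstep
    exact ih.trans ((FlowReach.of_le le_rfl).add (.of_adj huv 1))

theorem IsFlow.exists_reflTransGen {f : V → V → ℕ} (hf : IsFlow G f C D) :
    ∃ C', Relation.ReflTransGen (PebStep G) C C' ∧ D ≤ C' := by
  classical
  induction hn : ∑ u, ∑ v, f u v using Nat.strong_induction_on generalizing f C with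
  | _ n ih =>
  by_cases hmove : ∃ u, 2 ≤ C u ∧ ∑ v, f u v ≠ 0
  · obtain ⟨u, hu, hout⟩ := hmove
    obtain ⟨v, -, huv⟩ := Finset.exists_ne_zero_of_sum_ne_zero hout
    obtain ⟨E, rfl⟩ := exists_eq_add_single hu
    have hadj := hf.adj u v huv
    obtain ⟨f', rfl, hf'⟩ := hf.sub_single huv
    have hlt : ∑ a, ∑ b, f' a b < n := by
      rw [← hn]
      refine Finset.sum_lt_sum (fun a _ => Finset.sum_le_sum fun b _ => by simp)
        ⟨u, Finset.mem_univ u, Finset.sum_lt_sum (fun b _ => by simp) ⟨v, Finset.mem_univ v, ?_⟩⟩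
      simp
    obtain ⟨C', hreach, hD⟩ := ih _ hlt hf' rfl
    exact ⟨C', .head (pebStep_iff_exists_single.2 ⟨u, v, E, hadj, rfl, rfl⟩) hreach, hD⟩
  · push Not at hmove
    exact ⟨C, .refl, hf.le_of_blocked hmove⟩

theorem tSolvable_iff_flowReach [DecidableEq V] {r : V} {t : ℕ} :
    TSolvable G C r t ↔ FlowReach G C (Pi.single r t) := by
  constructor
  · rintro ⟨C', h, ht⟩
    exact (FlowReach.of_reflTransGen h).mono le_rfl (single_le_iff_le_apply.2 ht)
  · rintro ⟨f, hf⟩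
    obtain ⟨C', h, hD⟩ := hf.exists_reflTransGen
    exact ⟨C', h, by simpa using hD r⟩

end PebbleStep

/-! ### Exchanging configurations at a cut-vertex -/

/-- The graph on all vertices of `G` with the edges of `G` inside `S`. Unlike `G.induce S` it keeps
the vertex type, so that the parts of a graph can be recombined with `⊔`. -/
def restrictTo {V : Type*} (G : SimpleGraph V) (S : Set V) : SimpleGraph V where
  Adj a b := G.Adj a b ∧ a ∈ S ∧ b ∈ S
  symm := ⟨fun _ _ h => ⟨h.1.symm, h.2.2, h.2.1⟩⟩
  loopless := ⟨fun _ h => h.1.ne rfl⟩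

section RestrictTo

variable {V : Type*} {G : SimpleGraph V} {S S' : Set V}

theorem restrictTo_le : restrictTo G S ≤ G := fun _ _ h => h.1

theorem restrictTo_mono (h : S ⊆ S') : restrictTo G S ≤ restrictTo G S' :=
  fun _ _ hab => ⟨hab.1, h hab.2.1, h hab.2.2⟩

theorem restrictTo_univ (G : SimpleGraph V) : restrictTo G Set.univ = G := by
  ext a b
  simp [restrictTo]

theorem support_restrictTo_subset : (restrictTo G S).support ⊆ S := fun _ ⟨_, h⟩ => h.2.1

end RestrictTo

section Transfer

theorem exists_eq_add_of_adj_sup {V : Type*} {H K : SimpleGraph V} {f : V → V → ℕ}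
    (hf : ∀ u v, f u v ≠ 0 → (H ⊔ K).Adj u v) :
    ∃ fH fK : V → V → ℕ, f = fH + fK ∧ (∀ u v, fH u v ≠ 0 → H.Adj u v) ∧
      ∀ u v, fK u v ≠ 0 → K.Adj u v := by
  classical
  refine ⟨fun u v => if H.Adj u v then f u v else 0, fun u v => if H.Adj u v then 0 else f u v,
    ?_, fun u v h => ?_, fun u v h => ?_⟩
  · ext u v
    by_cases h : H.Adj u v <;> simp [h]
  · exact (ite_ne_right_iff.1 h).1
  · obtain ⟨hH, h⟩ := ite_ne_left_iff.1 h
    exact (hf u v h.symm).resolve_left hH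

variable {V : Type*} [Fintype V]

theorem sum_coe_of_forall_notMem_eq_zero {S : Set V} [Fintype S] {g : V → ℕ}
    (hg : ∀ v ∉ S, g v = 0) : ∑ v : S, g v = ∑ v, g v := by
  classical
  rw [← Finset.sum_subtype (Finset.univ.filter (· ∈ S)) (by simp) g]
  exact Finset.sum_filter_of_ne fun v _ hv => by_contra fun h => hv (hg v h)

theorem sum_eq_zero_of_support_subset {H : SimpleGraph V} {X : Set V} {f : V → V → ℕ} {v : V}
    (hf : ∀ u v, f u v ≠ 0 → H.Adj u v) (hH : H.support ⊆ X) (hv : v ∉ X) :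
    ∑ w, f v w = 0 ∧ ∑ w, f w v = 0 :=
  ⟨Finset.sum_eq_zero fun w _ => by_contra fun h => hv (hH ⟨w, hf v w h⟩),
    Finset.sum_eq_zero fun w _ => by_contra fun h => hv (hH ⟨w, (hf w v h).symm⟩)⟩

namespace FlowReach

variable {G H K : SimpleGraph V} {C C' D : V → ℕ} {x r : V}

theorem induce_iff {S : Set V} [Fintype S] (hG : G.support ⊆ S) (hD : ∀ v ∉ S, D v = 0) :
    FlowReach (G.induce S) (fun v => C v) (fun v => D v) ↔ FlowReach G C D := by
  classical
  constructor
  · rintro ⟨f, hf⟩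
    let g : V → V → ℕ := fun u v => if h : u ∈ S ∧ v ∈ S then f ⟨u, h.1⟩ ⟨v, h.2⟩ else 0
    refine ⟨g, fun u v huv => ?_, fun v => ?_⟩
    · obtain ⟨h, hne⟩ := dite_ne_right_iff.1 huv
      exact hf.adj _ _ hne
    · by_cases hv : v ∈ S
      · rw [← sum_coe_of_forall_notMem_eq_zero (S := S) (g := g v) fun w hw => by simp [g, hw],
          ← sum_coe_of_forall_notMem_eq_zero (S := S) (g := (g · v)) fun w hw => by simp [g, hw]]
        simpa [g, hv] using hf.balance ⟨v, hv⟩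
      · simp [g, hv, hD v hv]
  · rintro ⟨f, hf⟩
    refine ⟨fun u v => f u v, fun u v huv => hf.adj u v huv, fun v => ?_⟩
    rw [sum_coe_of_forall_notMem_eq_zero (S := S) (g := f v) fun w hw =>
        by_contra fun h => hw (hG ⟨v, (hf.adj _ _ h).symm⟩),
      sum_coe_of_forall_notMem_eq_zero (S := S) (g := (f · v)) fun w hw =>
        by_contra fun h => hw (hG ⟨v, hf.adj _ _ h⟩)]
    exact hf.balance v

variable [DecidableEq V]

theorem exists_through {X Y : Set V} (hH : H.support ⊆ X) (hK : K.support ⊆ Y)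
    (hXY : X ∩ Y ⊆ {x}) (hC : ∀ v ∉ X, C v = 0) (hC' : ∀ v ∉ Y, C' v = 0) (hr : r ∈ X) {t : ℕ}
    (h : FlowReach (H ⊔ K) (C + C') (Pi.single r t)) :
    ∃ k, FlowReach K C' (Pi.single x k) ∧ FlowReach H (C + Pi.single x k) (Pi.single r t) := by
  obtain ⟨f, hf⟩ := h
  obtain ⟨fH, fK, rfl, hfH, hfK⟩ := exists_eq_add_of_adj_sup hf.adj
  have balance := hf.balance
  simp only [Finset.sum_add_distrib, Pi.add_apply] at balance
  have off_Y : ∀ v ∉ Y, 2 * ∑ w, fH v w + (Pi.single r t : V → ℕ) v ≤ C v + ∑ w, fH w v :=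
    fun v hv => by
      have hb := balance v
      have := sum_eq_zero_of_support_subset hfK hK hv
      have := hC' v hv
      omega
  have off_X : ∀ v ∉ X, 2 * ∑ w, fK v w ≤ C' v + ∑ w, fK w v := fun v hv => by
    have := balance v
    have := sum_eq_zero_of_support_subset hfH hH hv
    have := hC v hv
    omega
  refine ⟨C' x + ∑ u, fK u x - 2 * ∑ w, fK x w, ?_, fH, hfH, fun v => ?_⟩
  · rcases le_total (C' x + ∑ u, fK u x) (2 * ∑ w, fK x w) with hle | hle
    · exact of_le (by simp [Nat.sub_eq_zero_of_le hle])
    · refine ⟨fK, hfK, fun v => ?_⟩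
      obtain rfl | hvx := eq_or_ne v x
      · rw [Pi.single_eq_same]
        omega
      rw [Pi.single_eq_of_ne hvx, add_zero]
      by_cases hvX : v ∈ X
      · have hvY : v ∉ Y := fun hvY => hvx (hXY ⟨hvX, hvY⟩)
        simp [sum_eq_zero_of_support_subset hfK hK hvY]
      · exact off_X v hvX
  · rw [Pi.add_apply]
    obtain rfl | hvx := eq_or_ne v x
    · have := balance v
      rw [Pi.single_eq_same]
      omega
    rw [Pi.single_eq_of_ne hvx, add_zero]
    by_cases hvX : v ∈ X
    · exact off_Y v fun hvY => hvx (hXY ⟨hvX, hvY⟩)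
    · have hvr : v ≠ r := fun h => hvX (h ▸ hr)
      simp [sum_eq_zero_of_support_subset hfH hH hvX, hvr]

theorem of_walk_support {s : V} (p : G.Walk x s) {k : ℕ} (hC : ∀ v ∉ p.support, C v = 0)
    (hk : k * 2 ^ p.length ≤ ∑ v, C v) : FlowReach G C (Pi.single x k) := by
  induction p generalizing C k with
  | nil =>
    rw [Finset.sum_eq_single_of_mem _ (Finset.mem_univ _)
      fun v _ hv => hC v (by simpa using hv)] at hk
    exact of_le (single_le_iff_le_apply.2 (by simpa using hk))
  | @cons x y s hxy p ih =>
    rcases le_total k (C x) with hx | hx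
    · exact of_le (single_le_iff_le_apply.2 hx)
    obtain ⟨C₀, hC₀⟩ := exists_eq_add_single (le_refl (C x))
    generalize hm : C x = m at hC₀ hx
    subst hC₀
    have hC₀x : C₀ x = 0 := by simpa using hm
    have rest : FlowReach G C₀ (Pi.single y (2 * (k - m))) := by
      refine ih (fun v hv => ?_) ?_
      · obtain rfl | hvx := eq_or_ne v x
        · exact hC₀x
        · exact (Nat.add_eq_zero_iff.1 (hC v (by simp [hv, hvx]))).1
      · have hsum : (k - m) * 2 ^ (p.length + 1) + m * 2 ^ (p.length + 1) ≤ ∑ v, C₀ v + m := by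
          rw [← add_mul, Nat.sub_add_cancel hx]
          simpa [Finset.sum_add_distrib] using hk
        have : m ≤ m * 2 ^ (p.length + 1) := Nat.le_mul_of_pos_right m (by positivity)
        rw [mul_comm 2, mul_assoc, ← pow_succ']
        omega
    have := (rest.trans (of_adj hxy.symm _)).add (of_le (le_refl (Pi.single x m)))
    rwa [← Pi.single_add, Nat.sub_add_cancel hx] at this

end FlowReach

/-- Every configuration on `X₁` can be replaced by one on `X₂` with at least `c` more pebbles, no
fewer pebbles on `E`, which is at most as powerful towards the root `r`. -/
def Transfer [DecidableEq V] (H₁ : SimpleGraph V) (X₁ : Set V) (H₂ : SimpleGraph V)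
    (X₂ E : Set V) (r : V) (c : ℤ) : Prop :=
  ∀ C : V → ℕ, (∀ v ∉ X₁, C v = 0) → ∃ C' : V → ℕ, (∀ v ∉ X₂, C' v = 0) ∧
    (∀ v ∈ E, C v ≤ C' v) ∧ ((∑ v, C v : ℕ) : ℤ) + c ≤ (∑ v, C' v : ℕ) ∧
    ∀ t, FlowReach H₂ C' (Pi.single r t) → FlowReach H₁ C (Pi.single r t)

-- The part of a configuration beyond `x` acts on the root only through the largest number `k` of
-- pebbles that it can bring to `x`.
theorem Transfer.glue [DecidableEq V] {H₁ H₂ K₁ K₂ : SimpleGraph V} {X₁ X₂ Y₁ Y₂ E E' : Set V}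
    {r x : V} {c c' : ℤ} (h : Transfer H₁ X₁ H₂ X₂ E r c) (h' : Transfer K₁ Y₁ K₂ Y₂ E' x c')
    (hH₂ : H₂.support ⊆ X₂) (hK₂ : K₂.support ⊆ Y₂) (hx₁ : x ∈ X₁) (hx₂ : x ∈ X₂) (hxE : x ∈ E)
    (hr : r ∈ X₂) (hXY₂ : X₂ ∩ Y₂ ⊆ {x}) (hE : ∀ v ∈ E, v ∈ Y₁ → v ≠ x → v ∈ E') :
    Transfer (H₁ ⊔ K₁) (X₁ ∪ Y₁) (H₂ ⊔ K₂) (X₂ ∪ Y₂) E r (c + c') := by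
  classical
  intro C hC
  obtain ⟨CX, CY, rfl, hCX, hCY, hCYX⟩ : ∃ CX CY : V → ℕ, C = CX + CY ∧ (∀ v ∉ X₁, CX v = 0) ∧
      (∀ v ∉ Y₁, CY v = 0) ∧ ∀ v ∈ X₁, CY v = 0 := by
    refine ⟨X₁.indicator C, X₁ᶜ.indicator C, (X₁.indicator_self_add_compl C).symm, ?_, ?_, ?_⟩
    · exact fun v hv => Set.indicator_of_notMem hv C
    · intro v hv
      by_cases hvX : v ∈ X₁
      · simp [hvX]
      · simp [hC v (by simp [hv, hvX])]
    · intro v hv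
      simp [hv]
  obtain ⟨k, hk⟩ := FlowReach.exists_forall_iff_le K₁ CY x
  obtain ⟨C₁, hC₁, hC₁E, hC₁sum, hC₁reach⟩ := h (CX + Pi.single x k) fun v hv => by
    have : v ≠ x := fun h => hv (h ▸ hx₁)
    simp [hCX v hv, this]
  obtain ⟨C₂, hC₂, hC₂E, hC₂sum, hC₂reach⟩ := h' CY hCY
  obtain ⟨C₀, rfl⟩ := exists_eq_add_single (le_trans (by simp) (hC₁E x hxE) : k ≤ C₁ x)
  have hC₀ : ∀ v ∉ X₂, C₀ v = 0 := fun v hv => (Nat.add_eq_zero_iff.1 (hC₁ v hv)).1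
  refine ⟨C₀ + C₂, fun v hv => ?_, fun v hv => ?_, ?_, fun t ht => ?_⟩
  · rw [Set.mem_union, not_or] at hv
    simp [hC₀ v hv.1, hC₂ v hv.2]
  · have hX : CX v ≤ C₀ v := by simpa using hC₁E v hv
    refine add_le_add hX ?_
    by_cases hvY : v ∈ Y₁
    · obtain rfl | hvx := eq_or_ne v x
      · simp [hCYX v hx₁]
      · exact hC₂E v (hE v hv hvY hvx)
    · simp [hCY v hvY]
  · simp only [Pi.add_apply, Finset.sum_add_distrib, Finset.sum_pi_single', Finset.mem_univ,
      if_true] at hC₁sum ⊢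
    omega
  · obtain ⟨k', hk', hreach⟩ := FlowReach.exists_through hH₂ hK₂ hXY₂ hC₀ hC₂ hr ht
    have hle : k' ≤ k := (hk k').1 (hC₂reach k' hk')
    have near : FlowReach H₁ (CX + Pi.single x k) (Pi.single r t) :=
      hC₁reach t (hreach.mono (add_le_add le_rfl (Pi.single_le_single.2 hle)) le_rfl)
    have far : FlowReach K₁ CY (Pi.single x k) := (hk k).2 le_rfl
    exact ((FlowReach.of_le le_rfl).add (far.mono_graph le_sup_right)).trans
      (near.mono_graph le_sup_left)

end Transfer

/-! ### Layers of a 2-path -/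

section Parity

variable (a : ℕ → ℕ) (m : ℕ)

theorem sum_range_eq_two_mul_sum_div_two_add : ∑ j ∈ Finset.range m, a j =
    2 * ∑ j ∈ Finset.range m, a j / 2 + ∑ j ∈ Finset.range m, a j % 2 := by
  rw [Finset.mul_sum, ← Finset.sum_add_distrib]
  exact Finset.sum_congr rfl fun j _ => (Nat.div_add_mod _ _).symm

theorem sum_range_mod_two_le : ∑ j ∈ Finset.range m, a j % 2 ≤ m := by
  simpa using Finset.sum_le_card_nsmul (Finset.range m) (a · % 2) 1 fun j _ => by omega

variable {a m}

theorem mod_two_eq_one_of_le_sum (h : m ≤ ∑ j ∈ Finset.range m, a j % 2) :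
    ∀ j < m, a j % 2 = 1 := by
  have hle : ∀ j ∈ Finset.range m, a j % 2 ≤ 1 := fun j _ => by omega
  have heq : ∑ j ∈ Finset.range m, a j % 2 = ∑ j ∈ Finset.range m, 1 := by
    simpa using (sum_range_mod_two_le a m).antisymm h
  exact fun j hj => (Finset.sum_eq_sum_iff_of_le hle).1 heq j (Finset.mem_range.2 hj)

end Parity

/-- The vertices `c 0, …, c (l - 1)` form a path all of whose vertices are adjacent to `p ∈ S`,
with `c 0` also adjacent to `q ∈ S`, and there are no further edges to `S`. A 2-path is a sequence
of layers, each hanging off the last two vertices of the previous one. -/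
structure Layer {V : Type*} (G : SimpleGraph V) (S : Finset V) (p q : V) (c : ℕ → V) (l : ℕ) :
    Prop where
  injOn : Set.InjOn c (Finset.range l)
  notMem : ∀ j < l, c j ∉ S
  left_mem : p ∈ S
  right_mem : q ∈ S
  adj_left : ∀ j < l, G.Adj (c j) p
  adj_right : 0 < l → G.Adj (c 0) q
  adj_succ : ∀ j, j + 1 < l → G.Adj (c (j + 1)) (c j)
  eq_or_eq : ∀ j < l, ∀ u ∈ S, G.Adj (c j) u → u = p ∨ u = q

theorem sum_indicator_coe {V : Type*} (S : Finset V) (C : V → ℕ) :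
    ∑ v ∈ S, (S : Set V).indicator C v = ∑ v ∈ S, C v :=
  Finset.sum_congr rfl fun _ hv => Set.indicator_of_mem (Finset.mem_coe.2 hv) C

section Solvable

variable {V : Type*} [Fintype V] [DecidableEq V]

/-- Any `k * 2 ^ i + |S| - 2 * i` pebbles on `S` suffice to move `k` pebbles to `x`: all but
`|S| - 2 * i` pebbles act as if they were on a path of length `i` ending in `x`. -/
def SolvesAll (G : SimpleGraph V) (x : V) (S : Finset V) (i : ℕ) : Prop :=
  ∀ (k : ℕ) (C : V → ℕ), k * 2 ^ i + S.card ≤ ∑ v ∈ S, C v + 2 * i →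
    FlowReach G C (Pi.single x k)

/-- One pebble fewer than in `SolvesAll` suffices if `k * 2 ^ i - 1` of the pebbles arrive at the
pair `p`, `q` and we may choose which of these two vertices receives the last one. -/
def SolvesPair (G : SimpleGraph V) (x : V) (S : Finset V) (p q : V) (i : ℕ) : Prop :=
  ∀ (k : ℕ) (C : V → ℕ), 1 ≤ k → S.card ≤ ∑ v ∈ S, C v + 2 * i →
    FlowReach G (C + Pi.single p (k * 2 ^ i - 1)) (Pi.single x k) ∨
    (1 ≤ i ∧ FlowReach G (C + Pi.single p (k * 2 ^ i - 2) + Pi.single q 1) (Pi.single x k))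

end Solvable

namespace Layer

variable {V : Type*} {G : SimpleGraph V} {S : Finset V} {p q : V} {c : ℕ → V} {l : ℕ}

theorem eq_iff (hL : Layer G S p q c l) {a b : ℕ} (ha : a < l) (hb : b < l) :
    c a = c b ↔ a = b :=
  hL.injOn.eq_iff (Finset.mem_coe.2 (Finset.mem_range.2 ha))
    (Finset.mem_coe.2 (Finset.mem_range.2 hb))

variable [DecidableEq V]

theorem disjoint (hL : Layer G S p q c l) : Disjoint S ((Finset.range l).image c) := by
  simp only [Finset.disjoint_right, Finset.forall_mem_image, Finset.mem_range]
  exact fun j => hL.notMem j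

theorem card_union (hL : Layer G S p q c l) :
    (S ∪ (Finset.range l).image c).card = S.card + l := by
  rw [Finset.card_union_of_disjoint hL.disjoint, Finset.card_image_of_injOn hL.injOn,
    Finset.card_range]

theorem sum_union (hL : Layer G S p q c l) (C : V → ℕ) :
    ∑ v ∈ S ∪ (Finset.range l).image c, C v =
      ∑ v ∈ S, C v + ∑ j ∈ Finset.range l, C (c j) := by
  rw [Finset.sum_union hL.disjoint, Finset.sum_image hL.injOn]

theorem indicator_add_sum_single_le (hL : Layer G S p q c l) {C : V → ℕ} {b : ℕ → ℕ}
    (hb : ∀ j < l, b j ≤ C (c j)) :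
    (S : Set V).indicator C + ∑ j ∈ Finset.range l, Pi.single (c j) (b j) ≤ C := by
  intro v
  simp only [Pi.add_apply, Finset.sum_apply, Pi.single_apply]
  by_cases hv : ∃ j < l, v = c j
  · obtain ⟨j, hj, rfl⟩ := hv
    have only_j : ∀ a ∈ Finset.range l, (if c j = c a then b a else 0) =
        if j = a then b a else 0 := fun a ha => by
      simp only [hL.eq_iff hj (Finset.mem_range.1 ha)]
    rw [Set.indicator_of_notMem (hL.notMem j hj), zero_add, Finset.sum_congr rfl only_j,
      Finset.sum_ite_eq, if_pos (Finset.mem_range.2 hj)]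
    exact hb j hj
  · push Not at hv
    rw [Finset.sum_eq_zero fun j hj => if_neg (hv j (Finset.mem_range.1 hj)), add_zero]
    exact Set.indicator_le_self _ _ v

variable [Fintype V] {x : V} {i : ℕ} {C : V → ℕ} {k : ℕ}

theorem reach_left (hL : Layer G S p q c l) (b : ℕ → ℕ) :
    FlowReach G (∑ j ∈ Finset.range l, Pi.single (c j) (2 * b j))
      (Pi.single p (∑ j ∈ Finset.range l, b j)) := by
  suffices ∀ m ≤ l, FlowReach G (∑ j ∈ Finset.range m, Pi.single (c j) (2 * b j))
      (Pi.single p (∑ j ∈ Finset.range m, b j)) from this l le_rfl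
  intro m hm
  induction m with
  | zero => exact .of_le (by simp)
  | succ m ih =>
    rw [Finset.sum_range_succ, Finset.sum_range_succ, Pi.single_add]
    exact (ih (by omega)).add (.of_adj (hL.adj_left m hm) (b m))

theorem reach_indicator_add_left (hL : Layer G S p q c l) (C : V → ℕ) :
    FlowReach G C
      ((S : Set V).indicator C + Pi.single p (∑ j ∈ Finset.range l, C (c j) / 2)) :=
  ((FlowReach.of_le le_rfl).add (hL.reach_left fun j => C (c j) / 2)).mono
    (hL.indicator_add_sum_single_le fun j _ => by omega) le_rfl

theorem reach_right (hL : Layer G S p q c l) {j : ℕ} (hj : j < l) :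
    FlowReach G (∑ a ∈ Finset.range j, Pi.single (c a) 1 + Pi.single (c j) 2) (Pi.single q 1) := by
  induction j with
  | zero => simpa using FlowReach.of_adj (hL.adj_right hj) 1
  | succ j ih =>
    have hmove := FlowReach.of_adj (hL.adj_succ j hj) 1
    refine ((FlowReach.of_le le_rfl).add hmove).trans ?_
    rw [Finset.sum_range_succ, add_assoc, ← Pi.single_add]
    exact ih (by omega)

/-- Two pebbles of `c j` turn into one on `q` by sliding down the layer, with the help of the odd
pebble of each `c a`, `a < j`, which is of no use for moves to `p`. -/
theorem reach_indicator_add_left_add_right (hL : Layer G S p q c l) {j : ℕ} (hj : j < l)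
    (htwo : 2 ≤ C (c j)) (hodd : ∀ a < j, C (c a) % 2 = 1) :
    FlowReach G C ((S : Set V).indicator C +
      Pi.single p (∑ a ∈ Finset.range l, C (c a) / 2 - 1) + Pi.single q 1) := by
  let slide : ℕ → ℕ := fun a => (if a < j then 1 else 0) + if a = j then 2 else 0
  let half : ℕ → ℕ := fun a => C (c a) / 2 - if a = j then 1 else 0
  have hslide : ∑ a ∈ Finset.range l, (Pi.single (c a) (slide a) : V → ℕ) =
      ∑ a ∈ Finset.range j, Pi.single (c a) 1 + Pi.single (c j) 2 := by
    have hfilter : (Finset.range l).filter (· < j) = Finset.range j := by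
      ext a
      simpa using fun h => h.trans hj
    simp [slide, Pi.single_add, apply_ite (Pi.single _), Finset.sum_add_distrib, hj,
      ← Finset.sum_filter, hfilter]
  have hhalf : ∑ a ∈ Finset.range l, half a + 1 = ∑ a ∈ Finset.range l, C (c a) / 2 :=
    calc ∑ a ∈ Finset.range l, half a + 1
        = ∑ a ∈ Finset.range l, (half a + if a = j then 1 else 0) := by
          simp [Finset.sum_add_distrib, hj]
      _ = ∑ a ∈ Finset.range l, C (c a) / 2 := Finset.sum_congr rfl fun a _ => by
          obtain rfl | ha := eq_or_ne a j
          · simp only [half, if_true]; omega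
          · simp [half, ha]
  have hle : ∀ a < l, 2 * half a + slide a ≤ C (c a) := fun a _ => by
    have := hodd a
    obtain rfl | ha := eq_or_ne a j
    · simp [half, slide]; omega
    · simp only [half, slide, ha, if_false]
      split_ifs <;> omega
  rw [← hhalf, Nat.add_sub_cancel]
  refine (((FlowReach.of_le le_rfl).add (hL.reach_left half)).add
    (hL.reach_right hj)).mono ?_ le_rfl
  rw [← hslide, add_assoc, ← Finset.sum_add_distrib]
  simp only [← Pi.single_add]
  exact hL.indicator_add_sum_single_le hle

theorem solves_of_le_half (hL : Layer G S p q c l)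
    (hw : FlowReach G (Pi.single p (k * 2 ^ i)) (Pi.single x k))
    (h : k * 2 ^ i ≤ ∑ j ∈ Finset.range l, C (c j) / 2) : FlowReach G C (Pi.single x k) :=
  (hL.reach_indicator_add_left C).trans <| hw.mono
    ((Pi.single_le_single.2 h).trans (le_add_of_nonneg_left bot_le)) le_rfl

theorem solves_of_le_add_half (hL : Layer G S p q c l) (hS : SolvesAll G x S i)
    (h : k * 2 ^ i + S.card ≤
      ∑ v ∈ S, C v + ∑ j ∈ Finset.range l, C (c j) / 2 + 2 * i) :
    FlowReach G C (Pi.single x k) := by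
  refine (hL.reach_indicator_add_left C).trans (hS k _ ?_)
  simpa [Finset.sum_add_distrib, sum_indicator_coe, hL.left_mem] using h

theorem solves_of_odd (hL : Layer G S p q c l) (hP : SolvesPair G x S p q i) (hk : 1 ≤ k)
    (hhalf : k * 2 ^ i - 1 = ∑ j ∈ Finset.range l, C (c j) / 2)
    (hS : S.card ≤ ∑ v ∈ S, C v + 2 * i) (hodd : ∀ j, j + 1 < l → C (c j) % 2 = 1) :
    FlowReach G C (Pi.single x k) := by
  rcases hP k ((S : Set V).indicator C) hk (by rwa [sum_indicator_coe]) with hleft | ⟨hi, hright⟩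
  · rw [hhalf] at hleft
    exact (hL.reach_indicator_add_left C).trans hleft
  · have two_le : 2 ≤ k * 2 ^ i :=
      calc 2 = 1 * 2 ^ 1 := by norm_num
        _ ≤ k * 2 ^ i := Nat.mul_le_mul hk (Nat.pow_le_pow_right two_pos hi)
    obtain ⟨j, hj, hne⟩ : ∃ j ∈ Finset.range l, C (c j) / 2 ≠ 0 :=
      Finset.exists_ne_zero_of_sum_ne_zero (by omega)
    have hj := Finset.mem_range.1 hj
    have slide := hL.reach_indicator_add_left_add_right hj (C := C) (by omega)
      fun a ha => hodd a (by omega)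
    rw [← hhalf, Nat.sub_sub] at slide
    exact slide.trans hright

theorem solvesAll (hL : Layer G S p q c l)
    (hw : ∀ k, FlowReach G (Pi.single p (k * 2 ^ i)) (Pi.single x k))
    (hS : SolvesAll G x S i) (hP : SolvesPair G x S p q i) :
    SolvesAll G x (S ∪ (Finset.range l).image c) (i + 1) := by
  intro k C h
  rcases Nat.eq_zero_or_pos k with rfl | hk
  · exact .of_le (by simp)
  rw [hL.card_union, hL.sum_union, sum_range_eq_two_mul_sum_div_two_add, pow_succ',
    mul_left_comm] at h
  have odd_le := sum_range_mod_two_le (fun j => C (c j)) l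
  by_cases hhalf : k * 2 ^ i ≤ ∑ j ∈ Finset.range l, C (c j) / 2
  · exact hL.solves_of_le_half (hw k) hhalf
  by_cases hadd : k * 2 ^ i + S.card ≤
      ∑ v ∈ S, C v + ∑ j ∈ Finset.range l, C (c j) / 2 + 2 * i
  · exact hL.solves_of_le_add_half hS hadd
  have hodd := mod_two_eq_one_of_le_sum (a := fun j => C (c j)) (m := l) (by omega)
  exact hL.solves_of_odd hP hk (by omega) (by omega) fun j hj => hodd j (by omega)

theorem solves_of_even_last {m : ℕ} (hL : Layer G S p q c (m + 1))
    (hw : FlowReach G (Pi.single p (k * 2 ^ i)) (Pi.single x k))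
    (hS : SolvesAll G x S i) (hP : SolvesPair G x S p q i) (hk : 1 ≤ k)
    (heven : C (c m) % 2 = 0)
    (h : 2 * (k * 2 ^ i) + S.card + m ≤
      ∑ v ∈ S, C v + ∑ j ∈ Finset.range (m + 1), C (c j) + 2 * (i + 1)) :
    FlowReach G C (Pi.single x k) := by
  rw [sum_range_eq_two_mul_sum_div_two_add] at h
  have odd_le := sum_range_mod_two_le (fun j => C (c j)) m
  have odd_eq := Finset.sum_range_succ (fun j => C (c j) % 2) m
  by_cases hhalf : k * 2 ^ i ≤ ∑ j ∈ Finset.range (m + 1), C (c j) / 2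
  · exact hL.solves_of_le_half hw hhalf
  by_cases hadd : k * 2 ^ i + S.card ≤
      ∑ v ∈ S, C v + ∑ j ∈ Finset.range (m + 1), C (c j) / 2 + 2 * i
  · exact hL.solves_of_le_add_half hS hadd
  have hodd := mod_two_eq_one_of_le_sum (a := fun j => C (c j)) (m := m) (by omega)
  exact hL.solves_of_odd hP hk (by omega) (by omega) fun j hj => hodd j (by omega)

theorem solves_of_even_last_add_single {m : ℕ} (hL : Layer G S p q c (m + 2))
    (hw : FlowReach G (Pi.single p (k * 2 ^ i)) (Pi.single x k))
    (hS : SolvesAll G x S i) (hP : SolvesPair G x S p q i) (hk : 1 ≤ k) {a b : ℕ}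
    (h : (S ∪ (Finset.range (m + 2)).image c).card ≤
      ∑ v ∈ S ∪ (Finset.range (m + 2)).image c, C v + 2 * (i + 1))
    (hab : k * 2 ^ (i + 1) ≤ a + b + 1) (heven : (C (c (m + 1)) + a) % 2 = 0) :
    FlowReach G (C + Pi.single (c (m + 1)) a + Pi.single (c m) b) (Pi.single x k) := by
  rw [hL.card_union, hL.sum_union] at h
  have hne : c (m + 1) ≠ c m := by simp [hL.eq_iff (a := m + 1) (b := m)]
  have single_sum {j : ℕ} (hj : j < m + 2) (e : ℕ) :
      ∑ v ∈ S, (Pi.single (c j) e : V → ℕ) v = 0 ∧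
        ∑ a ∈ Finset.range (m + 2), (Pi.single (c j) e : V → ℕ) (c a) = e := by
    refine ⟨Finset.sum_eq_zero fun v hv => ?_, ?_⟩
    · simp [ne_of_mem_of_not_mem hv (hL.notMem j hj)]
    · rw [Finset.sum_eq_single_of_mem j (Finset.mem_range.2 hj) fun a ha haj => by
        simp [hL.eq_iff (Finset.mem_range.1 ha) hj, haj], Pi.single_eq_same]
  refine hL.solves_of_even_last hw hS hP hk (by simpa [hne] using heven) ?_
  simp only [Pi.add_apply, Finset.sum_add_distrib, single_sum (lt_add_one _),
    single_sum (show m < m + 2 by omega)]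
  rw [mul_left_comm, ← pow_succ', add_assoc m 1 1, one_add_one_eq_two]
  omega

-- The two ways to place the last pebble give the last vertex of the layer different parities, and
-- an even number of pebbles there is enough.
theorem solvesPair {m : ℕ} (hL : Layer G S p q c (m + 2))
    (hw : ∀ k, FlowReach G (Pi.single p (k * 2 ^ i)) (Pi.single x k))
    (hS : SolvesAll G x S i) (hP : SolvesPair G x S p q i) :
    SolvesPair G x (S ∪ (Finset.range (m + 2)).image c) (c (m + 1)) (c m) (i + 1) ∧
      SolvesPair G x (S ∪ (Finset.range (m + 2)).image c) (c m) (c (m + 1)) (i + 1) := by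
  refine ⟨fun k C hk h => ?_, fun k C hk h => ?_⟩ <;>
    have solves (a b : ℕ) := hL.solves_of_even_last_add_single (hw k) hS hP hk h (a := a) (b := b)
    <;> have hpos : 2 ≤ k * 2 ^ (i + 1) := by
      rw [pow_succ', mul_left_comm]; exact Nat.le_mul_of_pos_right 2 (by positivity)
  · rcases Nat.even_or_odd (C (c (m + 1)) + (k * 2 ^ (i + 1) - 1)) with heven | hodd
    · left
      simpa using solves (k * 2 ^ (i + 1) - 1) 0 (by omega) (Nat.even_iff.1 heven)
    · rw [Nat.odd_iff] at hodd
      exact .inr ⟨by omega, solves _ 1 (by omega) (by omega)⟩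
  · rcases Nat.even_or_odd (C (c (m + 1))) with heven | hodd
    · left
      simpa using solves 0 (k * 2 ^ (i + 1) - 1) (by omega) (Nat.even_iff.1 heven)
    · rw [Nat.odd_iff] at hodd
      refine .inr ⟨by omega, ?_⟩
      rw [add_right_comm]
      exact solves 1 _ (by omega) (by omega)

end Layer

/-- A 2-path built up from the simplicial vertex `x` by layers; `p` and `q` are the last two
vertices and have distance `i` from `x`. -/
inductive Layered {V : Type*} [DecidableEq V] (G : SimpleGraph V) (x : V) :
    Finset V → V → V → ℕ → Prop
  | base : Layered G x {x} x x 0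
  | step {S : Finset V} {p q : V} {i : ℕ} {c : ℕ → V} {m : ℕ} : Layered G x S p q i →
      Layer G S p q c (m + 2) →
      Layered G x (S ∪ (Finset.range (m + 2)).image c) (c (m + 1)) (c m) (i + 1)
  | swap {S : Finset V} {p q : V} {i : ℕ} : Layered G x S p q i → Layered G x S q p i

/-- A 2-path with simplicial vertices `x` and `s`: the last layer ends in `s`. -/
def LayeredTo {V : Type*} [DecidableEq V] (G : SimpleGraph V) (x s : V) (S : Finset V) : Prop :=
  ∃ (S₀ : Finset V) (p q : V) (i : ℕ) (c : ℕ → V) (l : ℕ), Layered G x S₀ p q i ∧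
    Layer G S₀ p q c (l + 1) ∧ s = c l ∧ S = S₀ ∪ (Finset.range (l + 1)).image c

/-- A lower bound `ℓ` for the distance to `x` within `S`, which moreover does not drop along edges
leaving `A`, so that single pebbles on the vertices of `A` are of no use for reaching `x`. -/
structure Levels {V : Type*} (G : SimpleGraph V) (x : V) (S A : Finset V) (ℓ : V → ℕ) : Prop where
  subset : A ⊆ S
  notMem : x ∉ A
  zero : ℓ x = 0
  le_succ : ∀ u ∈ S, ∀ v ∈ S, G.Adj u v → ℓ u ≤ ℓ v + 1
  le : ∀ u ∈ A, ∀ v ∈ S, G.Adj u v → ℓ u ≤ ℓ v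

section Levels

variable {V : Type*} [DecidableEq V] {G : SimpleGraph V} {x : V} {S A M N : Finset V} {ℓ : V → ℕ}
  {i : ℕ}

theorem Levels.union (h : Levels G x S A ℓ) (hx : x ∈ S) (hSN : Disjoint S N) (hMN : M ⊆ N)
    (hN : ∀ u ∈ N, ∀ v ∈ S, G.Adj u v → v ∉ A ∧ ℓ v = i) :
    Levels G x (S ∪ N) (A ∪ M)
      (fun v => if v ∈ S then ℓ v else if v ∈ M then i else i + 1) := by
  set ℓ' : V → ℕ := fun v => if v ∈ S then ℓ v else if v ∈ M then i else i + 1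
  have on_S : ∀ v ∈ S, ℓ' v = ℓ v := fun v hv => if_pos hv
  have on_M : ∀ v ∈ M, ℓ' v = i := fun v hv => by
    simp [ℓ', hv, Finset.disjoint_right.1 hSN (hMN hv)]
  have on_N : ∀ v ∈ N, i ≤ ℓ' v ∧ ℓ' v ≤ i + 1 := fun v hv => by
    simp only [ℓ', if_neg (Finset.disjoint_right.1 hSN hv)]
    split_ifs <;> omega
  refine ⟨Finset.union_subset_union h.subset hMN, ?_, by rw [on_S x hx, h.zero], ?_, ?_⟩
  · rw [Finset.mem_union, not_or]
    exact ⟨h.notMem, fun hxM => Finset.disjoint_left.1 hSN hx (hMN hxM)⟩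
  · intro u hu v hv huv
    rcases Finset.mem_union.1 hu with hu | hu <;> rcases Finset.mem_union.1 hv with hv | hv
    · simpa only [on_S, hu, hv] using h.le_succ u hu v hv huv
    · have := hN v hv u hu huv.symm
      have := on_N v hv
      rw [on_S u hu]
      omega
    · have := hN u hu v hv huv
      have := on_N u hu
      rw [on_S v hv]
      omega
    · have := on_N u hu
      have := on_N v hv
      omega
  · intro u hu v hv huv
    rcases Finset.mem_union.1 hu with hu | hu <;> rcases Finset.mem_union.1 hv with hv | hv
    · simpa only [on_S, h.subset hu, hv] using h.le u hu v hv huv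
    · exact absurd hu (hN v hv u (h.subset hu) huv.symm).1
    · rw [on_S v hv, on_M u hu, (hN u (hMN hu) v hv huv).2]
    · rw [on_M u hu]
      exact (on_N v hv).1

theorem Levels.exists_layer {p q : V} {c : ℕ → V} {l m : ℕ} (h : Levels G x S A ℓ) (hx : x ∈ S)
    (hL : Layer G S p q c l) (hp : p ∉ A ∧ ℓ p = i) (hq : q ∉ A ∧ ℓ q = i) (hm : m ≤ l) :
    ∃ (A' : Finset V) (ℓ' : V → ℕ), Levels G x (S ∪ (Finset.range l).image c) A' ℓ' ∧
      A'.card = A.card + m ∧ ∀ j < l, m ≤ j → c j ∉ A' ∧ ℓ' (c j) = i + 1 := by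
  have hMN : (Finset.range m).image c ⊆ (Finset.range l).image c :=
    Finset.image_subset_image (Finset.range_subset_range.2 hm)
  have notMem_new : ∀ j < l, m ≤ j → c j ∉ (Finset.range m).image c := fun j hj hmj => by
    simp only [Finset.mem_image, Finset.mem_range, not_exists, not_and]
    exact fun a ha => mt (hL.eq_iff (ha.trans_le hm) hj).1 (by omega)
  refine ⟨_, _, h.union (i := i) hx hL.disjoint hMN ?_, ?_, fun j hj hmj => ⟨?_, ?_⟩⟩
  · rw [Finset.forall_mem_image]
    intro j hj v hv hadj
    obtain rfl | rfl := hL.eq_or_eq j (Finset.mem_range.1 hj) v hv hadj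
    exacts [hp, hq]
  · rw [Finset.card_union_of_disjoint (hL.disjoint.mono h.subset hMN), Finset.card_image_of_injOn
      (hL.injOn.mono (Finset.coe_subset.2 (Finset.range_subset_range.2 hm))), Finset.card_range]
  · rw [Finset.mem_union, not_or]
    exact ⟨fun hA => hL.notMem j hj (h.subset hA), notMem_new j hj hmj⟩
  · rw [if_neg (hL.notMem j hj), if_neg (notMem_new j hj hmj)]

end Levels

namespace Layered

variable {V : Type*} [DecidableEq V] {G : SimpleGraph V} {x p q : V} {S : Finset V} {i : ℕ}

theorem mem (h : Layered G x S p q i) : x ∈ S := by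
  induction h with
  | base => exact Finset.mem_singleton_self x
  | step _ _ ih => exact Finset.mem_union_left _ ih
  | swap _ ih => exact ih

theorem exists_walks (h : Layered G x S p q i) :
    (∃ w : G.Walk p x, w.length = i) ∧ ∃ w : G.Walk q x, w.length = i := by
  induction h with
  | base => exact ⟨⟨.nil, rfl⟩, .nil, rfl⟩
  | step _ hL ih =>
    obtain ⟨w, hw⟩ := ih.1
    exact ⟨⟨.cons (hL.adj_left _ (by omega)) w, by simp [hw]⟩,
      .cons (hL.adj_left _ (by omega)) w, by simp [hw]⟩
  | swap _ ih => exact ih.symm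

theorem exists_levels (h : Layered G x S p q i) :
    ∃ (A : Finset V) (ℓ : V → ℕ), Levels G x S A ℓ ∧ A.card + 2 * i + 1 = S.card ∧
      (p ∉ A ∧ ℓ p = i) ∧ (q ∉ A ∧ ℓ q = i) := by
  induction h with
  | base => exact ⟨∅, fun _ => 0, ⟨by simp, by simp, rfl, by simp, by simp⟩, by simp⟩
  | @step _ _ _ _ _ m h hL ih =>
    obtain ⟨A, ℓ, hℓ, hcard, hp, hq⟩ := ih
    obtain ⟨A', ℓ', hℓ', hcard', hlast⟩ := hℓ.exists_layer h.mem hL hp hq (Nat.le_add_right m 2)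
    refine ⟨A', ℓ', hℓ', ?_, hlast _ (by omega) (by omega), hlast _ (by omega) (by omega)⟩
    rw [hL.card_union]
    omega
  | swap _ ih =>
    obtain ⟨A, ℓ, hℓ, hcard, hp, hq⟩ := ih
    exact ⟨A, ℓ, hℓ, hcard, hq, hp⟩

variable [Fintype V]

theorem reach (h : Layered G x S p q i) (k : ℕ) :
    FlowReach G (Pi.single p (k * 2 ^ i)) (Pi.single x k) := by
  obtain ⟨⟨w, rfl⟩, -⟩ := h.exists_walks
  exact .of_walk w k

theorem solves (h : Layered G x S p q i) :
    SolvesAll G x S i ∧ SolvesPair G x S p q i ∧ SolvesPair G x S q p i := by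
  induction h with
  | base =>
    have pair : SolvesPair G x {x} x x 0 := fun k C hk hC => .inl <|
      .of_le (single_le_iff_le_apply.2 (by simp at hC ⊢; omega))
    exact ⟨fun k C hC => .of_le (single_le_iff_le_apply.2 (by simp at hC; omega)), pair, pair⟩
  | step h hL ih =>
    exact ⟨hL.solvesAll h.reach ih.1 ih.2.1, hL.solvesPair h.reach ih.1 ih.2.1⟩
  | swap _ ih => exact ⟨ih.1, ih.2.2, ih.2.1⟩

end Layered

namespace LayeredTo

variable {V : Type*} [DecidableEq V] {G : SimpleGraph V} {x s : V} {S : Finset V}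

theorem exists_pebbling [Fintype V] (h : LayeredTo G x s S) :
    ∃ D : ℕ, (∃ w : G.Walk s x, w.length = D) ∧ SolvesAll G x S D ∧
      ∃ (A : Finset V) (ℓ : V → ℕ), Levels G x S A ℓ ∧ s ∉ A ∧ A.card + 2 * D = S.card ∧
        ℓ s = D := by
  obtain ⟨S₀, p, q, i, c, l, h, hL, rfl, rfl⟩ := h
  obtain ⟨⟨w, hw⟩, -⟩ := h.exists_walks
  obtain ⟨A, ℓ, hℓ, hcard, hp, hq⟩ := h.exists_levels
  obtain ⟨A', ℓ', hℓ', hcard', hlast⟩ := hℓ.exists_layer h.mem hL hp hq (Nat.le_succ l)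
  have hs := hlast l (by omega) le_rfl
  refine ⟨i + 1, ⟨.cons (hL.adj_left l (by omega)) w, by simp [hw]⟩,
    hL.solvesAll h.reach h.solves.1 h.solves.2.1, A', ℓ', hℓ', hs.1, ?_, hs.2⟩
  rw [hL.card_union]
  omega

end LayeredTo

/-- Towards `x`, the graph `H` on `Y` behaves like a path of length `D` from `s` to `x` on which
`m` further pebbles are wasted: any `k * 2 ^ D + m` pebbles on `Y` bring `k` pebbles to `x`, and
`m` pebbles can be put on `Y` without being of any help to the pebbles on `s`. -/
structure PathLike {V : Type*} [Fintype V] [DecidableEq V] (H : SimpleGraph V) (Y : Set V)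
    (x s : V) (D m : ℕ) : Prop where
  mem : s ∈ Y
  reach : ∀ k, FlowReach H (Pi.single s (k * 2 ^ D)) (Pi.single x k)
  solves : ∀ (k : ℕ) (C : V → ℕ), (∀ v ∉ Y, C v = 0) → k * 2 ^ D + m ≤ ∑ v, C v →
    FlowReach H C (Pi.single x k)
  exists_useless : ∃ A : Finset V, ↑A ⊆ Y ∧ s ∉ A ∧ A.card = m ∧
    ∀ M k, FlowReach H (Pi.single s M + (A : Set V).indicator 1) (Pi.single x k) → k * 2 ^ D ≤ M

section PathLike

variable {V : Type*} [Fintype V] [DecidableEq V] {G H H₁ H₂ : SimpleGraph V} {Y Y₁ Y₂ : Set V}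
  {x s : V} {D m m₁ m₂ : ℕ}

theorem PathLike.le_length (h : PathLike H Y x s D m) (w : H.Walk s x) : D ≤ w.length := by
  obtain ⟨A, -, -, -, hA⟩ := h.exists_useless
  have hw := hA (1 * 2 ^ w.length) 1 ((FlowReach.of_walk w 1).mono (le_add_of_nonneg_right bot_le)
    le_rfl)
  exact (Nat.pow_le_pow_iff_right one_lt_two).1 (by simpa using hw)

theorem PathLike.of_walk (hG : PathLike G Y x s D m) (hHG : H ≤ G) (p : H.Walk x s)
    (hp : p.length = D) (hY₁ : ∀ v ∈ Y₁, v ∈ p.support) (hs : s ∈ Y₁) :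
    PathLike H Y₁ x s D 0 := by
  subst hp
  refine ⟨hs, fun k => ?_, fun k C hC hk => ?_, ∅, by simp, by simp, rfl, fun M k h => ?_⟩
  · simpa using FlowReach.of_walk p.reverse k
  · exact .of_walk_support p (fun v hv => hC v fun hv' => hv (hY₁ v hv')) hk
  · obtain ⟨A, -, -, -, hA⟩ := hG.exists_useless
    refine hA M k ((h.mono_graph hHG).mono (add_le_add le_rfl fun v => ?_) le_rfl)
    simp

theorem PathLike.transfer (h₁ : PathLike H₁ Y₁ x s D m₁) (h₂ : PathLike H₂ Y₂ x s D m₂) :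
    Transfer H₁ Y₁ H₂ Y₂ {s} x (m₂ - m₁) := by
  intro C hC
  obtain ⟨A, hAY, hsA, hAm, hA⟩ := h₂.exists_useless
  obtain ⟨k, hk⟩ := FlowReach.exists_forall_iff_le H₁ C x
  have sum_lt : ∑ v, C v < (k + 1) * 2 ^ D + m₁ := by
    by_contra hle
    exact k.lt_irrefl ((hk (k + 1)).1 (h₁.solves (k + 1) C hC (not_lt.1 hle)))
  have apply_lt : C s < (k + 1) * 2 ^ D := by
    by_contra hle
    exact k.lt_irrefl ((hk (k + 1)).1 ((h₁.reach (k + 1)).mono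
      (single_le_iff_le_apply.2 (not_lt.1 hle)) le_rfl))
  refine ⟨Pi.single s ((k + 1) * 2 ^ D - 1) + (A : Set V).indicator 1, fun v hv => ?_, ?_, ?_,
    fun t ht => (hk t).2 ?_⟩
  · have hvs : v ≠ s := fun h => hv (h ▸ h₂.mem)
    have hvA : v ∉ (A : Set V) := fun h => hv (hAY h)
    simp [hvs, hvA]
  · rintro v rfl
    simp only [Pi.add_apply, Pi.single_eq_same]
    omega
  · have : ∑ v, (A : Set V).indicator (1 : V → ℕ) v = m₂ := by
      simp [Set.indicator_apply, hAm]
    simp only [Pi.add_apply, Finset.sum_add_distrib, Finset.sum_pi_single', Finset.mem_univ,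
      if_true, this]
    omega
  · have hlt : t * 2 ^ D < (k + 1) * 2 ^ D := by
      have := hA _ t ht
      omega
    exact Nat.lt_succ_iff.1 (Nat.lt_of_mul_lt_mul_right hlt)

-- A pebble on `v` is worth `2 ^ (ℓ s - ℓ v)`.
theorem Levels.mul_two_pow_le {S A : Finset V} {ℓ : V → ℕ} (hℓ : Levels G x S A ℓ)
    (hGS : G.support ⊆ S) (hsA : s ∉ A) {M k : ℕ}
    (h : FlowReach G (Pi.single s M + (A : Set V).indicator 1) (Pi.single x k)) :
    k * 2 ^ ℓ s ≤ M := by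
  have mem_of_adj {u v : V} (huv : G.Adj u v) : u ∈ S ∧ v ∈ S := ⟨hGS ⟨v, huv⟩, hGS ⟨u, huv.symm⟩⟩
  have hsum := h.sum_mul_le (A := A) (y := fun v => 2 ^ (ℓ s - ℓ v)) (fun u hu => ?_)
    (fun u v huv _ => ?_) fun u v huv hu => ?_
  · have off_A : ∀ u ∈ Aᶜ, (Pi.single s M + (A : Set V).indicator 1 : V → ℕ) u * 2 ^ (ℓ s - ℓ u) =
        (Pi.single s M : V → ℕ) u * 2 ^ (ℓ s - ℓ u) := fun u hu => by
      simp [Finset.mem_compl.1 hu]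
    rw [Finset.sum_congr rfl off_A] at hsum
    simpa [Pi.single_apply, hℓ.notMem, hsA, hℓ.zero] using hsum
  · simp [hu, ne_of_mem_of_not_mem hu hsA]
  · have := hℓ.le_succ u (mem_of_adj huv).1 v (mem_of_adj huv).2 huv
    rw [← pow_succ']
    exact Nat.pow_le_pow_right two_pos (by omega)
  · have := hℓ.le u hu v (mem_of_adj huv).2 huv
    exact Nat.pow_le_pow_right two_pos (by omega)

theorem LayeredTo.exists_pathLike {S : Finset V} (h : LayeredTo G x s S) (hGS : G.support ⊆ S)
    (hs : s ∈ S) : ∃ D m, (∃ w : G.Walk s x, w.length = D) ∧ m + 2 * D = S.card ∧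
      PathLike G S x s D m := by
  obtain ⟨_, ⟨w, rfl⟩, hsolve, A, ℓ, hℓ, hsA, hcard, hℓs⟩ := h.exists_pebbling
  refine ⟨w.length, A.card, ⟨w, rfl⟩, hcard, hs, FlowReach.of_walk w, fun k C hC hk => ?_, A,
    Finset.coe_subset.2 hℓ.subset, hsA, rfl, fun M k h => hℓs ▸ hℓ.mul_two_pow_le hGS hsA h⟩
  have hsum : ∑ v ∈ S, C v = ∑ v, C v :=
    Finset.sum_subset (Finset.subset_univ S) fun v _ hv => hC v hv
  exact hsolve k C (by omega)

end PathLike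

/-! ### 2-trees and 2-paths inside a graph -/

/-- The neighbours of `v` in `S` are the ends `a`, `b` of an edge: adding `v` to a 2-tree on `S`
yields a 2-tree. -/
structure IsLink {V : Type*} (G : SimpleGraph V) (S : Finset V) (v a b : V) : Prop where
  left_mem : a ∈ S
  right_mem : b ∈ S
  adj : G.Adj a b
  adj_iff : ∀ u ∈ S, G.Adj v u ↔ u = a ∨ u = b

/-- The subgraph of `G` induced on `S` is a 2-tree. -/
inductive TwoTreeOn {V : Type*} [DecidableEq V] (G : SimpleGraph V) : Finset V → Prop
  | base {a b : V} : G.Adj a b → TwoTreeOn G {a, b}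
  | ext {S : Finset V} {v a b : V} : TwoTreeOn G S → v ∉ S → IsLink G S v a b →
      TwoTreeOn G (insert v S)

/-- `v` is simplicial in the subgraph of `G` induced on `S`. -/
def SimplicialOn {V : Type*} (G : SimpleGraph V) (S : Finset V) (v : V) : Prop :=
  ∀ a ∈ S, ∀ b ∈ S, G.Adj v a → G.Adj v b → a ≠ b → G.Adj a b

section Link

variable {V : Type*} {G : SimpleGraph V} {S S' : Finset V} {v u a b : V}

theorem SimplicialOn.mono (h : SimplicialOn G S v) (hS : S' ⊆ S) : SimplicialOn G S' v :=
  fun a ha b hb => h a (hS ha) b (hS hb)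

theorem SimplicialOn.insert_of_not_adj [DecidableEq V] (h : SimplicialOn G S v)
    (hvu : ¬ G.Adj v u) : SimplicialOn G (insert u S) v := by
  intro a ha b hb hva hvb
  exact h a (Finset.mem_of_mem_insert_of_ne ha fun h => hvu (h ▸ hva)) b
    (Finset.mem_of_mem_insert_of_ne hb fun h => hvu (h ▸ hvb)) hva hvb

namespace IsLink

theorem symm (h : IsLink G S v a b) : IsLink G S v b a :=
  ⟨h.right_mem, h.left_mem, h.adj.symm, fun u hu => (h.adj_iff u hu).trans or_comm⟩

theorem adj_left (h : IsLink G S v a b) : G.Adj v a := (h.adj_iff a h.left_mem).2 (.inl rfl)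

theorem simplicialOn (h : IsLink G S v a b) : SimplicialOn G S v := by
  intro u hu w hw hvu hvw huw
  rcases (h.adj_iff u hu).1 hvu with rfl | rfl <;> rcases (h.adj_iff w hw).1 hvw with rfl | rfl
  exacts [absurd rfl huw, h.adj, h.adj.symm, absurd rfl huw]

theorem mono (h : IsLink G S v a b) (hS : S' ⊆ S) (ha : a ∈ S') (hb : b ∈ S') :
    IsLink G S' v a b :=
  ⟨ha, hb, h.adj, fun u hu => h.adj_iff u (hS hu)⟩

variable [DecidableEq V]

theorem insert_of_not_adj (h : IsLink G S v a b) (hvu : ¬ G.Adj v u) :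
    IsLink G (insert u S) v a b := by
  refine ⟨Finset.mem_insert_of_mem h.left_mem, Finset.mem_insert_of_mem h.right_mem, h.adj,
    fun w hw => ?_⟩
  rcases Finset.mem_insert.1 hw with rfl | hw
  · refine iff_of_false hvu ?_
    rintro (rfl | rfl)
    exacts [hvu h.adj_left, hvu h.symm.adj_left]
  · exact h.adj_iff w hw

theorem not_adj_of_simplicialOn {a' b' : V} (h : IsLink G S v a b) (hv : v ∉ S) (hu : u ∈ S)
    (h' : IsLink G (S.erase u) u a' b') (hsim : SimplicialOn G (insert v S) u) :
    ¬ G.Adj v u := by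
  intro hvu
  have link {w : V} (hw : w ∈ S.erase u) (huw : G.Adj u w) : w = a ∨ w = b :=
    have hwS := Finset.mem_of_mem_erase hw
    (h.adj_iff w hwS).1 <| hsim v (by simp) w (by simp [hwS]) hvu.symm huw
      (ne_of_mem_of_not_mem hwS hv).symm
  have ha' := link h'.left_mem h'.adj_left
  have hb' := link h'.right_mem h'.symm.adj_left
  have huab := (h.adj_iff u hu).1 hvu
  have ha'u := Finset.ne_of_mem_erase h'.left_mem
  have hb'u := Finset.ne_of_mem_erase h'.right_mem
  have := h'.adj.ne
  grind

end IsLink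

end Link

theorem eq_pair_of_card_le_two {α : Type*} [DecidableEq α] {S : Finset α} (hS : S.card ≤ 2)
    {a b : α} (ha : a ∈ S) (hb : b ∈ S) (hab : a ≠ b) : S = {a, b} :=
  (Finset.eq_of_subset_of_card_le (by simp [Finset.insert_subset_iff, ha, hb])
    (by rwa [Finset.card_pair hab])).symm

namespace TwoTreeOn

variable {V : Type*} [DecidableEq V] {G : SimpleGraph V} {S : Finset V} {u v w : V}

theorem of_embedding {W : Type} {H : SimpleGraph W} (hH : IsTwoTree H) (f : H ↪g G)
    (hS : ∀ v, v ∈ S ↔ v ∈ Set.range f) : TwoTreeOn G S := by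
  induction hH generalizing S with
  | base H e h =>
    have : S = {f (e.symm 0), f (e.symm 1)} := by
      ext v
      rw [hS, Set.mem_range, e.symm.surjective.exists]
      simp [Fin.exists_fin_two, eq_comm]
    rw [this]
    exact base (f.map_adj_iff.2 ((h _ _).2 (by simp)))
  | extend H v hdeg hcl _ ih =>
    obtain ⟨a, b, hab, hN⟩ := Set.ncard_eq_two.1 hdeg
    have adj_iff {w} : H.Adj v w ↔ w = a ∨ w = b := by rw [← mem_neighborSet, hN]; simp
    have ha : H.Adj v a := adj_iff.2 (.inl rfl)
    have hb : H.Adj v b := adj_iff.2 (.inr rfl)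
    have mem_erase {w} (hw : H.Adj v w) : f w ∈ S.erase (f v) :=
      Finset.mem_erase.2 ⟨f.injective.ne hw.ne', (hS _).2 ⟨w, rfl⟩⟩
    rw [← Finset.insert_erase ((hS (f v)).2 ⟨v, rfl⟩)]
    refine ext (ih ((Embedding.induce _).trans f) fun u => ?_) (Finset.notMem_erase _ _)
      ⟨mem_erase ha, mem_erase hb, f.map_adj_iff.2 (hcl ha hb hab), fun u hu => ?_⟩
    · rw [Finset.mem_erase, hS]
      constructor
      · rintro ⟨hne, w, rfl⟩
        exact ⟨⟨w, fun h => hne (h ▸ rfl)⟩, rfl⟩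
      · rintro ⟨w, rfl⟩
        exact ⟨fun h => w.2 (f.injective h), w, rfl⟩
    · obtain ⟨w, rfl⟩ := (hS u).1 (Finset.mem_of_mem_erase hu)
      rw [f.map_adj_iff, f.injective.eq_iff, f.injective.eq_iff, adj_iff]

theorem two_le_card (h : TwoTreeOn G S) : 2 ≤ S.card := by
  induction h with
  | base h => rw [Finset.card_pair h.ne]
  | ext _ hv _ ih => rw [Finset.card_insert_of_notMem hv]; omega

theorem adj_of_card_le_three (h : TwoTreeOn G S) (hS : S.card ≤ 3) (hu : u ∈ S) (hv : v ∈ S)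
    (huv : u ≠ v) : G.Adj u v := by
  cases h with
  | @base a b h =>
    have := h.symm
    grind
  | @ext S w a b h hw hl =>
    rw [Finset.card_insert_of_notMem hw] at hS
    rw [eq_pair_of_card_le_two (by omega) hl.left_mem hl.right_mem hl.adj.ne] at hu hv
    have := hl.adj_left.symm
    have := hl.symm.adj_left.symm
    have := hl.adj.symm
    have := hl.adj_left
    have := hl.symm.adj_left
    have := hl.adj
    grind

theorem simplicialOn_of_card_le_three (h : TwoTreeOn G S) (hS : S.card ≤ 3) (v : V) :
    SimplicialOn G S v :=
  fun _ ha _ hb _ _ hab => h.adj_of_card_le_three hS ha hb hab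

theorem erase_of_card_eq_three (h : TwoTreeOn G S) (hS : S.card = 3) (hu : u ∈ S) :
    (∃ a b, IsLink G (S.erase u) u a b) ∧ TwoTreeOn G (S.erase u) := by
  obtain ⟨a, b, hab, he⟩ := Finset.card_eq_two.1
    (show (S.erase u).card = 2 by rw [Finset.card_erase_of_mem hu, hS])
  have ha : a ∈ S.erase u := by simp [he]
  have hb : b ∈ S.erase u := by simp [he]
  have hadj {v w : V} (hv : v ∈ S) (hw : w ∈ S) (hvw : v ≠ w) : G.Adj v w :=
    h.adj_of_card_le_three hS.le hv hw hvw
  have habadj : G.Adj a b := hadj (Finset.mem_of_mem_erase ha) (Finset.mem_of_mem_erase hb) hab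
  refine ⟨⟨a, b, ha, hb, habadj, fun w hw => iff_of_true ?_ (by simpa [he] using hw)⟩,
    he ▸ base habadj⟩
  exact hadj hu (Finset.mem_of_mem_erase hw) (Finset.ne_of_mem_erase hw).symm

theorem erase (h : TwoTreeOn G S) (hS : 3 ≤ S.card) (hu : u ∈ S) (hsim : SimplicialOn G S u) :
    (∃ a b, IsLink G (S.erase u) u a b) ∧ TwoTreeOn G (S.erase u) := by
  induction h with
  | base h => rw [Finset.card_pair h.ne] at hS; omega
  | @ext S v a b h hv hl ih =>
    rcases hS.eq_or_lt with h3 | h3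
    · exact (ext h hv hl).erase_of_card_eq_three h3.symm hu
    rcases Finset.mem_insert.1 hu with rfl | huS
    · rw [Finset.erase_insert hv]
      exact ⟨⟨a, b, hl⟩, h⟩
    rw [Finset.card_insert_of_notMem hv] at h3
    obtain ⟨⟨a', b', hl'⟩, he⟩ := ih (by omega) huS (hsim.mono (Finset.subset_insert v S))
    have hvu : ¬ G.Adj v u := hl.not_adj_of_simplicialOn hv huS hl' hsim
    have mem_erase {w : V} (hvw : G.Adj v w) (hw : w ∈ S) : w ∈ S.erase u :=
      Finset.mem_erase.2 ⟨fun h => hvu (h ▸ hvw), hw⟩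
    rw [Finset.erase_insert_of_ne (ne_of_mem_of_not_mem huS hv).symm]
    exact ⟨⟨a', b', hl'.insert_of_not_adj (mt Adj.symm hvu)⟩,
      ext he (fun h => hv (Finset.mem_of_mem_erase h)) (hl.mono (Finset.erase_subset u S)
        (mem_erase hl.adj_left hl.left_mem) (mem_erase hl.symm.adj_left hl.right_mem))⟩

theorem exists_simplicialOn_not_adj (h : TwoTreeOn G S) (hS : 4 ≤ S.card) :
    ∃ u ∈ S, ∃ w ∈ S, u ≠ w ∧ ¬ G.Adj u w ∧ SimplicialOn G S u ∧ SimplicialOn G S w := by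
  induction h with
  | base h => rw [Finset.card_pair h.ne] at hS; omega
  | @ext S v a b h hv hl ih =>
    rw [Finset.card_insert_of_notMem hv] at hS
    obtain ⟨w, hw, hwsim, hwa, hwb⟩ : ∃ w ∈ S, SimplicialOn G S w ∧ w ≠ a ∧ w ≠ b := by
      by_cases h3 : S.card ≤ 3
      · obtain ⟨w, hw, hwab⟩ := Finset.exists_mem_notMem_of_card_lt_card
          (show ({a, b} : Finset V).card < S.card by rw [Finset.card_pair hl.adj.ne]; omega)
        rw [Finset.mem_insert, Finset.mem_singleton, not_or] at hwab
        exact ⟨w, hw, h.simplicialOn_of_card_le_three h3 w, hwab⟩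
      · obtain ⟨u, hu, w, hw, huw, hnadj, husim, hwsim⟩ := ih (by omega)
        by_contra! hcon
        have hw_eq : w ≠ a → w = b := hcon w hw hwsim
        obtain rfl | hua := eq_or_ne u a
        · exact hnadj (hw_eq huw.symm ▸ hl.adj)
        · obtain rfl := hcon u hu husim hua
          exact hnadj (not_imp_comm.1 hw_eq huw.symm ▸ hl.adj.symm)
    have hvw : ¬ G.Adj v w := fun h => ((hl.adj_iff w hw).1 h).elim hwa hwb
    exact ⟨v, Finset.mem_insert_self v S, w, Finset.mem_insert_of_mem hw,
      (ne_of_mem_of_not_mem hw hv).symm, hvw,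
      hl.simplicialOn.insert_of_not_adj (G.loopless.irrefl v),
      hwsim.insert_of_not_adj (mt Adj.symm hvw)⟩

theorem not_adj_of_simplicialOn (h : TwoTreeOn G S) (hS : 4 ≤ S.card) (hu : u ∈ S)
    (hv : v ∈ S) (husim : SimplicialOn G S u) (hvsim : SimplicialOn G S v) : ¬ G.Adj u v := by
  obtain rfl | huv := eq_or_ne u v
  · exact G.loopless.irrefl u
  obtain ⟨⟨a, b, hl⟩, he⟩ := h.erase (by omega) hu husim
  have hve : v ∈ S.erase u := Finset.mem_erase.2 ⟨huv.symm, hv⟩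
  obtain ⟨⟨a', b', hl'⟩, -⟩ := he.erase (by rw [Finset.card_erase_of_mem hu]; omega) hve
    (hvsim.mono (Finset.erase_subset u S))
  exact fun hadj => hl.not_adj_of_simplicialOn (Finset.notMem_erase u S) hve hl'
    (by rwa [Finset.insert_erase hu]) hadj

end TwoTreeOn

section Append

variable {V : Type*} {G : SimpleGraph V} {x s u v p q : V} {S : Finset V}
  {c : ℕ → V} {l i : ℕ}

theorem image_range_update [DecidableEq V] (c : ℕ → V) (s : V) (l : ℕ) :
    (Finset.range (l + 1)).image (Function.update c l s) =
      insert s ((Finset.range l).image c) := by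
  rw [Finset.range_add_one, Finset.image_insert, Function.update_self]
  congr 1
  exact Finset.image_congr fun j hj => Function.update_of_ne (Finset.mem_range.1 hj).ne ..

namespace Layer

theorem const (hv : v ∉ S) (hp : p ∈ S) (hq : q ∈ S)
    (hadj : ∀ w ∈ S, G.Adj v w ↔ w = p ∨ w = q) : Layer G S p q (fun _ => v) 1 where
  injOn := by simp
  notMem _ _ := hv
  left_mem := hp
  right_mem := hq
  adj_left _ _ := (hadj p hp).2 (.inl rfl)
  adj_right _ := (hadj q hq).2 (.inr rfl)
  adj_succ _ hj := by omega
  eq_or_eq _ _ w hw := (hadj w hw).1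

theorem swap (hL : Layer G S p q c 1) : Layer G S q p c 1 where
  injOn := hL.injOn
  notMem := hL.notMem
  left_mem := hL.right_mem
  right_mem := hL.left_mem
  adj_left j hj := (Nat.lt_one_iff.1 hj) ▸ hL.adj_right one_pos
  adj_right _ := hL.adj_left 0 one_pos
  adj_succ _ hj := by omega
  eq_or_eq j hj w hw h := (hL.eq_or_eq j hj w hw h).symm

variable [DecidableEq V]

theorem mem_union (S : Finset V) (c : ℕ → V) {j : ℕ} (hj : j < l) :
    c j ∈ S ∪ (Finset.range l).image c :=
  Finset.mem_union_right S (Finset.mem_image_of_mem c (Finset.mem_range.2 hj))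

theorem snoc (hL : Layer G S p q c (l + 1)) (hv : v ∉ S ∪ (Finset.range (l + 1)).image c)
    (hadj : ∀ w ∈ S ∪ (Finset.range (l + 1)).image c, G.Adj v w ↔ w = c l ∨ w = p) :
    Layer G S p q (Function.update c (l + 1) v) (l + 2) := by
  set c' := Function.update c (l + 1) v with hc'
  have last : c' (l + 1) = v := Function.update_self ..
  have init : ∀ j < l + 1, c' j = c j := fun j hj => Function.update_of_ne (by omega) ..
  have image_init : c' '' Finset.range (l + 1) = c '' Finset.range (l + 1) :=
    Set.image_congr fun j hj => init j (Finset.mem_range.1 hj)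
  have lt_or_eq {j : ℕ} (hj : j < l + 2) : j < l + 1 ∨ j = l + 1 := Nat.lt_succ_iff_lt_or_eq.1 hj
  rw [Finset.mem_union, not_or] at hv
  refine ⟨?_, fun j hj => ?_, hL.left_mem, hL.right_mem, fun j hj => ?_, fun _ => ?_,
    fun j hj => ?_, fun j hj w hw hadjw => ?_⟩
  · rw [Finset.range_add_one, Finset.coe_insert, Set.injOn_insert (by simp), image_init, last]
    refine ⟨hL.injOn.congr fun j hj => (init j (Finset.mem_range.1 hj)).symm, ?_⟩
    rw [← Finset.coe_image]
    exact hv.2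
  · rcases lt_or_eq hj with hj | rfl
    · exact init j hj ▸ hL.notMem j hj
    · exact last ▸ hv.1
  · rcases lt_or_eq hj with hj | rfl
    · exact init j hj ▸ hL.adj_left j hj
    · exact last ▸ (hadj p (Finset.mem_union_left _ hL.left_mem)).2 (.inr rfl)
  · exact init 0 (by omega) ▸ hL.adj_right (by omega)
  · rw [init j (by omega)]
    rcases lt_or_eq hj with hj | hj
    · exact init (j + 1) hj ▸ hL.adj_succ j hj
    · obtain rfl : j = l := by omega
      exact last ▸ (hadj (c j) (mem_union S c hj.le)).2 (.inl rfl)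
  · rcases lt_or_eq hj with hj | rfl
    · exact hL.eq_or_eq j hj w hw (init j hj ▸ hadjw)
    · rw [last] at hadjw
      refine .inl (((hadj w (Finset.mem_union_left _ hw)).1 hadjw).resolve_left ?_)
      rintro rfl
      exact hL.notMem l (by omega) hw

end Layer

variable [DecidableEq V]

namespace LayeredTo

theorem pair (hsx : G.Adj s x) : LayeredTo G x s {x, s} := by
  refine ⟨{x}, x, x, 0, fun _ => s, 0, .base, .const (by simpa using hsx.ne) (by simp) (by simp)
    fun w hw => ?_, rfl, by simp⟩
  obtain rfl := Finset.mem_singleton.1 hw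
  simpa using hsx

theorem insert_same_layer (h : Layered G x S p q i) (hL : Layer G S p q c (l + 1))
    (hv : v ∉ S ∪ (Finset.range (l + 1)).image c)
    (hadj : ∀ w ∈ S ∪ (Finset.range (l + 1)).image c, G.Adj v w ↔ w = c l ∨ w = p) :
    LayeredTo G x v (insert v (S ∪ (Finset.range (l + 1)).image c)) :=
  ⟨S, p, q, i, _, l + 1, h, hL.snoc hv hadj, (Function.update_self (l + 1) v c).symm, by
    rw [image_range_update, Finset.union_insert]⟩

theorem insert_new_layer (h : Layered G x S p q i) (hL : Layer G S p q c (l + 2))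
    (hv : v ∉ S ∪ (Finset.range (l + 2)).image c)
    (hadj : ∀ w ∈ S ∪ (Finset.range (l + 2)).image c, G.Adj v w ↔ w = c (l + 1) ∨ w = c l) :
    LayeredTo G x v (insert v (S ∪ (Finset.range (l + 2)).image c)) :=
  ⟨_, _, _, _, fun _ => v, 0, h.step hL, .const hv (Layer.mem_union S c (by omega))
    (Layer.mem_union S c (by omega)) hadj, rfl, by
      rw [zero_add, Finset.range_one, Finset.image_singleton, Finset.union_comm _ {v},
        Finset.singleton_union]⟩

/-- A 2-path grows at an edge `s u`, `s` being its end, which lies on the rim: the only further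
edge at `s` is the other rim edge. -/
theorem insert (h : LayeredTo G x s S) (hv : v ∉ S) (hl : IsLink G S v s u)
    (hs : ∃ b, ∀ w ∈ S, G.Adj s w → w = u ∨ w = b) : LayeredTo G x v (insert v S) := by
  obtain ⟨S₀, p, q, i, c, l, h, hL, rfl, rfl⟩ := h
  obtain ⟨b, hs⟩ := hs
  by_cases hup : u = p
  · exact insert_same_layer h hL hv (hup ▸ hl.adj_iff)
  cases l with
  | zero =>
    suffices u = q from insert_same_layer h.swap hL.swap hv (this ▸ hl.adj_iff)
    rcases Finset.mem_union.1 hl.right_mem with hu | hu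
    · exact (hL.eq_or_eq 0 one_pos u hu hl.adj).resolve_left hup
    · obtain rfl : u = c 0 := by simpa using hu
      exact absurd rfl hl.adj.ne
  | succ m =>
    suffices u = c m from insert_new_layer h hL hv (this ▸ hl.adj_iff)
    by_contra hum
    have hp := hs p (Finset.mem_union_left _ hL.left_mem) (hL.adj_left _ (by omega))
    have hc := hs (c m) (Layer.mem_union S₀ c (by omega)) (hL.adj_succ m (by omega))
    refine hL.notMem m (by omega) ?_
    rw [hc.resolve_left (Ne.symm hum), ← hp.resolve_left (Ne.symm hup)]
    exact hL.left_mem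

end LayeredTo

/-- The 2-tree on `S` is a 2-path with simplicial vertices `x` and `s`. For the edge and the
triangle, all of whose vertices are simplicial, `x ≠ s` are arbitrary. -/
structure IsTwoPathOn (G : SimpleGraph V) (S : Finset V) (x s : V) : Prop where
  twoTreeOn : TwoTreeOn G S
  left_mem : x ∈ S
  right_mem : s ∈ S
  ne : x ≠ s
  simplicialOn : SimplicialOn G S s
  eq_or_eq : S.card ≤ 3 ∨ ∀ v ∈ S, SimplicialOn G S v → v = x ∨ v = s

theorem TwoTreeOn.exists_forall_adj (h : TwoTreeOn G S) (hs : s ∈ S) (hsim : SimplicialOn G S s)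
    (hu : u ∈ S) (hsu : G.Adj s u) : ∃ b, ∀ w ∈ S, G.Adj s w → w = u ∨ w = b := by
  rcases h.two_le_card.eq_or_lt with h2 | h3
  · refine ⟨u, fun w hw hsw => ?_⟩
    rw [eq_pair_of_card_le_two h2.symm.le hs hu hsu.ne] at hw
    simpa [hsw.ne'] using hw
  · obtain ⟨⟨a, b, hl⟩, -⟩ := h.erase h3 hs hsim
    have adj_iff {w : V} (hw : w ∈ S) (hsw : G.Adj s w) : w = a ∨ w = b :=
      (hl.adj_iff w (Finset.mem_erase.2 ⟨hsw.ne', hw⟩)).1 hsw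
    rcases adj_iff hu hsu with rfl | rfl
    · exact ⟨b, fun w => adj_iff⟩
    · exact ⟨a, fun w hw hsw => (adj_iff hw hsw).symm⟩

namespace IsTwoPathOn

theorem of_erase {a b : V} (h : TwoTreeOn G (S.erase s)) (hx : x ∈ S.erase s)
    (hl : IsLink G (S.erase s) s a b) (hcard : (S.erase s).card ≤ 3) :
    ∃ a b, IsLink G (S.erase s) s a b ∧ IsTwoPathOn G (S.erase s) x a := by
  have twoPath {y : V} (hy : y ∈ S.erase s) (hxy : x ≠ y) : IsTwoPathOn G (S.erase s) x y :=
    ⟨h, hx, hy, hxy, h.simplicialOn_of_card_le_three hcard y, .inl hcard⟩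
  by_cases hxa : x = a
  · exact ⟨b, a, hl.symm, twoPath hl.right_mem (hxa ▸ hl.adj.ne)⟩
  · exact ⟨a, b, hl, twoPath hl.left_mem hxa⟩

theorem eq_or_eq_or_eq {a b v : V} (h : IsTwoPathOn G S x s) (hS : 3 < S.card)
    (hl : IsLink G (S.erase s) s a b) (hv : v ∈ S.erase s) (hvsim : SimplicialOn G (S.erase s) v) :
    v = x ∨ v = a ∨ v = b := by
  by_contra! hcon
  have hvs : ¬ G.Adj v s := fun hvs => ((hl.adj_iff v hv).1 hvs.symm).elim hcon.2.1 hcon.2.2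
  have hvS := hvsim.insert_of_not_adj hvs
  rw [Finset.insert_erase h.right_mem] at hvS
  exact (h.eq_or_eq.resolve_left (by omega) v (Finset.mem_of_mem_erase hv) hvS).elim hcon.1
    (Finset.ne_of_mem_erase hv)

theorem exists_link (h : IsTwoPathOn G S x s) (hS : 3 ≤ S.card) :
    ∃ a b, IsLink G (S.erase s) s a b ∧ IsTwoPathOn G (S.erase s) x a := by
  obtain ⟨⟨a, b, hl⟩, he⟩ := h.twoTreeOn.erase hS h.right_mem h.simplicialOn
  have hx : x ∈ S.erase s := Finset.mem_erase.2 ⟨h.ne, h.left_mem⟩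
  have hS' : S.card = (S.erase s).card + 1 := (Finset.card_erase_add_one h.right_mem).symm
  by_cases hcard : (S.erase s).card ≤ 3
  · exact of_erase he hx hl hcard
  have twoPath {a b : V} (hl : IsLink G (S.erase s) s a b) (hxa : x ≠ a)
      (ha : SimplicialOn G (S.erase s) a) : IsTwoPathOn G (S.erase s) x a := by
    refine ⟨he, hx, hl.left_mem, hxa, ha, .inr fun v hv hvsim => ?_⟩
    obtain hv | hv | rfl := h.eq_or_eq_or_eq (by omega) hl hv hvsim
    · exact .inl hv
    · exact .inr hv
    · exact absurd hl.adj (he.not_adj_of_simplicialOn (by omega) hl.left_mem hv ha hvsim)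
  -- Of two nonadjacent simplicial vertices one is `x` and the other one `a` or `b`.
  obtain ⟨u, hu, w, hw, huw, hnadj, husim, hwsim⟩ := he.exists_simplicialOn_not_adj (by omega)
  obtain ⟨y, hxy, hy, hab⟩ : ∃ y, x ≠ y ∧ SimplicialOn G (S.erase s) y ∧ (y = a ∨ y = b) := by
    have := hl.adj
    have := hl.adj.symm
    have := h.eq_or_eq_or_eq (by omega) hl hu husim
    have := h.eq_or_eq_or_eq (by omega) hl hw hwsim
    grind
  obtain rfl | rfl := hab
  · exact ⟨y, b, hl, twoPath hl hxy hy⟩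
  · exact ⟨y, a, hl.symm, twoPath hl.symm hxy hy⟩

theorem layeredTo (h : IsTwoPathOn G S x s) : LayeredTo G x s S := by
  induction hn : S.card generalizing S s with
  | zero => exact absurd h.twoTreeOn.two_le_card (by omega)
  | succ n ih =>
    rcases h.twoTreeOn.two_le_card.eq_or_lt with h2 | h3
    · rw [eq_pair_of_card_le_two h2.symm.le h.left_mem h.right_mem h.ne]
      exact .pair (h.twoTreeOn.adj_of_card_le_three (by omega) h.right_mem h.left_mem h.ne.symm)
    · obtain ⟨a, b, hl, ha⟩ := h.exists_link h3
      have hcard : (S.erase s).card = n := by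
        rw [Finset.card_erase_of_mem h.right_mem, hn, Nat.add_sub_cancel]
      rw [← Finset.insert_erase h.right_mem]
      exact (ih ha hcard).insert (Finset.notMem_erase s S) hl
        (ha.twoTreeOn.exists_forall_adj ha.right_mem ha.simplicialOn hl.right_mem hl.adj)

end IsTwoPathOn

end Append

/-- Some cycle of `G` inside `S` contains both edges `e` and `f`. -/
def CommonCycle {V : Type*} (G : SimpleGraph V) (S : Set V) (e f : Sym2 V) : Prop :=
  ∃ (u : V) (c : G.Walk u u), c.IsCycle ∧ (∀ w ∈ c.support, w ∈ S) ∧ e ∈ c.edges ∧ f ∈ c.edges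

section CommonCycle

variable {V : Type*} {G : SimpleGraph V} {u v a b : V} {e f : Sym2 V}

theorem CommonCycle.symm {S : Set V} : CommonCycle G S e f → CommonCycle G S f e
  | ⟨u, c, hc, hcS, he, hf⟩ => ⟨u, c, hc, hcS, hf, he⟩

theorem CommonCycle.mono {S S' : Set V} (hS : S ⊆ S') : CommonCycle G S e f → CommonCycle G S' e f
  | ⟨u, c, hc, hcS, he, hf⟩ => ⟨u, c, hc, fun w hw => hS (hcS w hw), he, hf⟩

theorem exists_isPath_of_isCycle {c : G.Walk u u} (hc : c.IsCycle) (ha : a ∈ c.support)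
    (hb : b ∈ c.support) (hab : a ≠ b) (hf : f ∈ c.edges) :
    ∃ p : G.Walk a b, p.IsPath ∧ p.support ⊆ c.support ∧ f ∈ p.edges := by
  classical
  obtain ⟨c', hc', hsupp, hf'⟩ : ∃ c' : G.Walk a a, c'.IsCycle ∧
      (∀ w, w ∈ c'.support ↔ w ∈ c.support) ∧ f ∈ c'.edges :=
    ⟨c.rotate a ha, (Walk.isCycle_rotate ha).2 hc, fun w => c.mem_support_rotate_iff a ha,
      (c.rotate_edges a ha).mem_iff.2 hf⟩
  have hb' : b ∈ c'.support := (hsupp b).2 hb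
  have hsplit := c'.take_spec hb'
  rw [← hsplit, Walk.edges_append, List.mem_append] at hf'
  rcases hf' with hf' | hf'
  · exact ⟨_, hc'.isPath_takeUntil hb', fun w hw =>
      (hsupp w).1 (c'.support_takeUntil_subset_support hb' hw), hf'⟩
  · refine ⟨(c'.dropUntil b hb').reverse, .reverse ?_, fun w hw => (hsupp w).1 ?_, by simpa⟩
    · rw [← hsplit] at hc'
      exact hc'.isPath_of_append_right (Walk.not_nil_of_ne hab)
    · rw [Walk.support_reverse, List.mem_reverse] at hw
      exact (c'.support_dropUntil_suffix_support hb').subset hw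

variable [DecidableEq V]

namespace IsLink

variable {S : Finset V}

theorem eq_or_eq_or_mem_edgeSet (hl : IsLink G S v a b)
    (he : e ∈ (restrictTo G ↑(insert v S)).edgeSet) :
    e = s(v, a) ∨ e = s(v, b) ∨ e ∈ (restrictTo G S).edgeSet := by
  by_cases hve : v ∈ e
  · obtain ⟨w, rfl⟩ := Sym2.mem_iff_exists.1 hve
    have hw : w ∈ S := Finset.mem_of_mem_insert_of_ne he.2.2 he.1.ne'
    rcases (hl.adj_iff w hw).1 he.1 with rfl | rfl
    exacts [.inl rfl, .inr (.inl rfl)]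
  · induction e with | _ u w
    rw [Sym2.mem_iff, not_or] at hve
    exact .inr (.inr ⟨he.1, Finset.mem_of_mem_insert_of_ne he.2.1 (Ne.symm hve.1),
      Finset.mem_of_mem_insert_of_ne he.2.2 (Ne.symm hve.2)⟩)

theorem commonCycle_of_isPath (hl : IsLink G S v a b) (hv : v ∉ S) {p : G.Walk a b}
    (hp : p.IsPath) (hpS : ∀ w ∈ p.support, w ∈ S)
    (hf : f = s(v, a) ∨ f = s(v, b) ∨ f ∈ p.edges) :
    CommonCycle G ↑(insert v S) s(v, a) f := by
  refine ⟨v, .cons hl.adj_left (p.concat hl.symm.adj_left.symm), ?_, ?_, by simp, ?_⟩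
  · refine (Walk.cons_isCycle_iff ..).2 ⟨hp.concat (fun h => hv (hpS v h)) _, ?_⟩
    rw [Walk.edges_concat, List.concat_eq_append, List.mem_append, not_or]
    refine ⟨fun h => hv (hpS v (p.fst_mem_support_of_mem_edges h)), ?_⟩
    simpa [hl.adj.ne] using fun h _ => hl.symm.adj_left.ne h
  · simp only [Walk.support_cons, Walk.support_concat, List.mem_cons, List.mem_append,
      Finset.coe_insert, Set.mem_insert_iff, Finset.mem_coe]
    grind
  · rcases hf with rfl | rfl | hf <;> simp [Walk.edges_concat, Sym2.eq_swap, *]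

theorem commonCycle (hl : IsLink G S v a b) (hv : v ∉ S)
    (h : ∀ f ∈ (restrictTo G S).edgeSet, s(a, b) ≠ f → CommonCycle G S s(a, b) f)
    (hf : f ∈ (restrictTo G ↑(insert v S)).edgeSet) :
    CommonCycle G ↑(insert v S) s(v, a) f := by
  by_cases hfab : f ∈ (restrictTo G S).edgeSet ∧ s(a, b) ≠ f
  · obtain ⟨u, c, hc, hcS, habc, hfc⟩ := h f hfab.1 hfab.2
    obtain ⟨p, hp, hpc, hfp⟩ := exists_isPath_of_isCycle hc
      (c.fst_mem_support_of_mem_edges habc) (c.snd_mem_support_of_mem_edges habc) hl.adj.ne hfc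
    exact hl.commonCycle_of_isPath hv hp (fun w hw => hcS w (hpc hw)) (.inr (.inr hfp))
  · refine hl.commonCycle_of_isPath hv (p := hl.adj.toWalk) (by simp [hl.adj.ne])
      (by simp [hl.left_mem, hl.right_mem])
      ((hl.eq_or_eq_or_mem_edgeSet hf).imp_right (Or.imp_right fun hfS => ?_))
    obtain rfl : s(a, b) = f := by_contra fun h => hfab ⟨hfS, h⟩
    simp

end IsLink

namespace TwoTreeOn

variable {S : Finset V}

theorem commonCycle (h : TwoTreeOn G S) (he : e ∈ (restrictTo G S).edgeSet)
    (hf : f ∈ (restrictTo G S).edgeSet) (hef : e ≠ f) : CommonCycle G S e f := by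
  induction h generalizing e f with
  | @base a b _ =>
    induction e with | _ u v
    induction f with | _ w z
    obtain ⟨huv, hu, hv⟩ := he
    obtain ⟨hwz, hw, hz⟩ := hf
    have := huv.ne
    have := hwz.ne
    simp only [Finset.coe_insert, Finset.coe_singleton, Set.mem_insert_iff,
      Set.mem_singleton_iff] at hu hv hw hz
    grind
  | @ext S v a b _ hv hl ih =>
    have left {f : Sym2 V} (hf : f ∈ (restrictTo G ↑(insert v S)).edgeSet) :=
      hl.commonCycle hv (fun f => ih ⟨hl.adj, hl.left_mem, hl.right_mem⟩) hf
    have right {f : Sym2 V} (hf : f ∈ (restrictTo G ↑(insert v S)).edgeSet) :=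
      hl.symm.commonCycle hv (fun f => ih ⟨hl.adj.symm, hl.right_mem, hl.left_mem⟩) hf
    rcases hl.eq_or_eq_or_mem_edgeSet he with rfl | rfl | heS
    · exact left hf
    · exact right hf
    rcases hl.eq_or_eq_or_mem_edgeSet hf with rfl | rfl | hfS
    · exact (left he).symm
    · exact (right he).symm
    · exact (ih heS hfS hef).mono (by simp)

theorem reachable (h : TwoTreeOn G S) (z : V) (hu : u ∈ S) (hv : v ∈ S) (huz : u ≠ z)
    (hvz : v ≠ z) : (restrictTo G {w | w ∈ S ∧ w ≠ z}).Reachable u v := by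
  induction h generalizing u v with
  | @base a b h =>
    by_cases huv : u = v
    · rw [huv]
    · have := h.symm
      exact Adj.reachable ⟨by grind, ⟨hu, huz⟩, ⟨hv, hvz⟩⟩
  | @ext S w a b _ hw hl ih =>
    obtain ⟨y, hy, hyz, hwy⟩ : ∃ y ∈ S, y ≠ z ∧ G.Adj w y := by
      by_cases haz : a = z
      · exact ⟨b, hl.right_mem, haz ▸ hl.adj.ne', hl.symm.adj_left⟩
      · exact ⟨a, hl.left_mem, haz, hl.adj_left⟩
    have reachable_y {u : V} (hu : u ∈ insert w S) (huz : u ≠ z) :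
        (restrictTo G {y | y ∈ insert w S ∧ y ≠ z}).Reachable u y := by
      rcases Finset.mem_insert.1 hu with rfl | hu'
      · exact Adj.reachable ⟨hwy, ⟨hu, huz⟩, ⟨Finset.mem_insert_of_mem hy, hyz⟩⟩
      · exact (ih hu' hy huz hyz).mono
          (restrictTo_mono fun v hv => ⟨Finset.mem_insert_of_mem hv.1, hv.2⟩)
    exact (reachable_y hu huz).trans (reachable_y hv hvz).symm

end TwoTreeOn

end CommonCycle

/-- The walk `p` is a spine of the 2-path which `G` induces on `B`, and `T` consists of its edges
within `B`. -/
structure IsSpineWalk {V : Type} (G T : SimpleGraph V) (B : Set V) {x s : B}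
    (p : (G.induce B).Walk x s) : Prop where
  ne : x ≠ s
  isSimplicial_left : IsSimplicial (G.induce B) x
  isSimplicial_right : IsSimplicial (G.induce B) s
  isPath : p.IsPath
  length_eq : p.length = (G.induce B).dist x s
  adj_iff : ∀ a b : B, T.Adj a b ↔ s(a, b) ∈ p.edges

section Walk

variable {V : Type*} {G : SimpleGraph V} {B : Set V}

theorem forall_mem_support_of_support_subset (hGB : G.support ⊆ B) {u w : V} (p : G.Walk u w)
    (hu : u ∈ B) : ∀ v ∈ p.support, v ∈ B := by
  induction p with
  | nil => simpa using hu
  | cons h p ih => simpa [hu] using ih (hGB ⟨_, h.symm⟩)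

theorem exists_walk_of_induce {x s : B} (p : (G.induce B).Walk x s) : ∃ q : G.Walk x s,
    q.length = p.length ∧ q.support = p.support.map Subtype.val ∧
      q.edges = p.edges.map (Sym2.map Subtype.val) :=
  let φ : G.induce B →g G := (Embedding.induce B).toHom
  ⟨p.map φ, p.length_map φ, p.support_map φ, p.edges_map φ⟩

theorem length_induce {u w : V} (p : G.Walk u w) (hp : ∀ v ∈ p.support, v ∈ B) :
    (p.induce B hp).length = p.length := by
  conv_rhs => rw [← p.map_induce hp]
  exact (Walk.length_map _ _).symm

theorem induce_restrictTo_self (B : Set V) : (restrictTo G B).induce B = G.induce B := by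
  ext a b
  simp [restrictTo]

end Walk

section Block

variable {V : Type} {G T : SimpleGraph V}

theorem simplicialOn_iff_isSimplicial {S : Finset V} {v : V} (hv : v ∈ S) :
    SimplicialOn G S v ↔ IsSimplicial (G.induce (S : Set V)) ⟨v, hv⟩ := by
  constructor
  · exact fun h a ha b hb hab => h a a.2 b b.2 ha hb (Subtype.coe_ne_coe.2 hab)
  · exact fun h a ha b hb hva hvb hab =>
      h (x := ⟨a, ha⟩) hva (y := ⟨b, hb⟩) hvb (Subtype.coe_ne_coe.1 hab)

theorem IsTwoPath.eq_or_eq_of_isSimplicial [Finite V] {x s v : V} (hG : IsTwoPath G)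
    (hxs : x ≠ s) (hx : IsSimplicial G x) (hs : IsSimplicial G s) (hv : IsSimplicial G v) :
    v = x ∨ v = s := by
  have h : {x, s} = {v | IsSimplicial G v} := Set.eq_of_subset_of_ncard_le
    (by rintro _ (rfl | rfl) <;> assumption) (by rw [hG.2, Set.ncard_pair hxs])
  exact (Set.ext_iff.1 h v).2 hv

namespace IsSpineWalk

variable {B : Set V} {x s : B} {p : (G.induce B).Walk x s}

theorem reverse (h : IsSpineWalk G T B p) : IsSpineWalk G T B p.reverse where
  ne := h.ne.symm
  isSimplicial_left := h.isSimplicial_right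
  isSimplicial_right := h.isSimplicial_left
  isPath := h.isPath.reverse
  length_eq := by rw [Walk.length_reverse, h.length_eq, SimpleGraph.dist_comm]
  adj_iff := by simpa using h.adj_iff

theorem image_edges_eq (h : IsSpineWalk G T B p) :
    Sym2.map Subtype.val '' {e | e ∈ p.edges} = (restrictTo T B).edgeSet := by
  ext e
  constructor
  · rintro ⟨e, he, rfl⟩
    induction e with | _ a b
    exact ⟨(h.adj_iff a b).2 he, a.2, b.2⟩
  · induction e with | _ c d
    rintro ⟨hcd, hc, hd⟩
    exact ⟨s(⟨c, hc⟩, ⟨d, hd⟩), (h.adj_iff ⟨c, hc⟩ ⟨d, hd⟩).1 hcd, rfl⟩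

theorem ncard_edgeSet (h : IsSpineWalk G T B p) :
    (restrictTo T B).edgeSet.ncard = p.length := by
  classical
  rw [← h.image_edges_eq, Set.ncard_image_of_injective _ (Sym2.map.injective
    Subtype.val_injective), ← Walk.length_edges, ← List.toFinset_card_of_nodup
    h.isPath.edges_nodup, ← Set.ncard_coe_finset, List.coe_toFinset]

theorem exists_walk (h : IsSpineWalk G T B p) : ∃ q : (restrictTo T B).Walk x s,
    q.length = p.length ∧ ∀ v ∈ (restrictTo T B).support, v ∈ q.support := by
  obtain ⟨q, hq, hqs, hqe⟩ := exists_walk_of_induce p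
  have hqT : ∀ e ∈ q.edges, e ∈ (restrictTo T B).edgeSet := fun e he => by
    rw [← h.image_edges_eq]
    rwa [hqe, List.mem_map] at he
  refine ⟨q.transfer _ hqT, by rw [Walk.length_transfer, hq], ?_⟩
  rintro v ⟨u, huv, hv, hu⟩
  rw [Walk.support_transfer, hqs]
  exact List.mem_map_of_mem (f := Subtype.val)
    (p.fst_mem_support_of_mem_edges ((h.adj_iff ⟨v, hv⟩ ⟨u, hu⟩).1 huv))

theorem right_mem_support (h : IsSpineWalk G T B p) : (s : V) ∈ (restrictTo T B).support := by
  obtain ⟨q, -, -⟩ := h.exists_walk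
  have hq : ¬ q.reverse.Nil := Walk.not_nil_of_ne (Subtype.coe_ne_coe.2 h.ne.symm)
  exact ⟨_, q.reverse.adj_snd hq⟩

end IsSpineWalk

variable [DecidableEq V]

theorem IsTwoTree.twoTreeOn {S : Finset V} (h : IsTwoTree (G.induce (S : Set V))) :
    TwoTreeOn G S :=
  .of_embedding h (Embedding.induce _) (by simp)

theorem IsTwoPath.isTwoPathOn [Finite V] {S : Finset V} (h : IsTwoPath (G.induce (S : Set V)))
    {x s : (S : Set V)} (hxs : x ≠ s) (hx : IsSimplicial (G.induce (S : Set V)) x)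
    (hs : IsSimplicial (G.induce (S : Set V)) s) : IsTwoPathOn G S x s where
  twoTreeOn := h.1.twoTreeOn
  left_mem := x.2
  right_mem := s.2
  ne := Subtype.coe_ne_coe.2 hxs
  simplicialOn := (simplicialOn_iff_isSimplicial s.2).2 hs
  eq_or_eq := .inr fun _ hv hvsim =>
    (h.eq_or_eq_of_isSimplicial hxs hx hs ((simplicialOn_iff_isSimplicial hv).1 hvsim)).imp
      (congrArg Subtype.val) (congrArg Subtype.val)

variable [Fintype V]

theorem IsTwoPath.exists_pathLike {S : Finset V} (h : IsTwoPath (G.induce (S : Set V)))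
    (hGS : G.support ⊆ S) {x s : (S : Set V)} (hxs : x ≠ s)
    (hx : IsSimplicial (G.induce (S : Set V)) x) (hs : IsSimplicial (G.induce (S : Set V)) s) :
    ∃ m, m + 2 * (G.induce (S : Set V)).dist x s = S.card ∧
      PathLike G S x s ((G.induce (S : Set V)).dist x s) m := by
  obtain ⟨D, m, ⟨w, hw⟩, hm, hP⟩ := (h.isTwoPathOn hxs hx hs).layeredTo.exists_pathLike hGS s.2
  have hD : D = (G.induce (S : Set V)).dist x s := by
    let w' : (G.induce (S : Set V)).Walk s x :=
      w.induce S (forall_mem_support_of_support_subset hGS w s.2)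
    have hw' : w'.length = D := (length_induce w _).trans hw
    obtain ⟨q, hq⟩ := w'.reachable.exists_walk_length_eq_dist
    obtain ⟨q', hq', -⟩ := exists_walk_of_induce q
    rw [SimpleGraph.dist_comm]
    exact le_antisymm (hq ▸ hq' ▸ hP.le_length q') (hw' ▸ dist_le w')
  exact ⟨m, hD ▸ hm, hD ▸ hP⟩

theorem IsSpineWalk.transfer {B : Set V} {x s : B} {p : (G.induce B).Walk x s}
    (h : IsSpineWalk G T B p) (hB : IsTwoPath (G.induce B)) (hTG : T ≤ G) :
    Transfer (restrictTo G B) B (restrictTo T B) (restrictTo T B).support {(s : V)} x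
        (-(B.ncard - 2 * (restrictTo T B).edgeSet.ncard)) ∧
      Transfer (restrictTo T B) (restrictTo T B).support (restrictTo G B) B {(s : V)} x
        (B.ncard - 2 * (restrictTo T B).edgeSet.ncard) := by
  lift B to Finset V using B.toFinite
  have hsx := h.isSimplicial_left
  have hss := h.isSimplicial_right
  have hlen := h.length_eq
  rw [← induce_restrictTo_self] at hB hsx hss
  obtain ⟨m, hm, hG⟩ := hB.exists_pathLike support_restrictTo_subset h.ne hsx hss
  rw [induce_restrictTo_self, ← h.length_eq] at hm hG
  obtain ⟨q, hq, hqs⟩ := h.exists_walk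
  have hle : restrictTo T (B : Set V) ≤ restrictTo G B := fun _ _ hab => ⟨hTG hab.1, hab.2⟩
  have hT := hG.of_walk hle q hq hqs h.right_mem_support
  have hm' : (m : ℤ) = (B : Set V).ncard - 2 * p.length := by
    rw [Set.ncard_coe_finset]
    omega
  rw [h.ncard_edgeSet, ← hm']
  exact ⟨by simpa using hG.transfer hT, by simpa using hT.transfer hG⟩

end Block

/-! ### Blocks and skeletons -/

section Crossing

variable {V : Type*} {G H : SimpleGraph V} {S : Set V} {e : Sym2 V}

theorem mem_edgeSet_restrictTo :
    e ∈ (restrictTo G S).edgeSet ↔ e ∈ G.edgeSet ∧ ∀ w ∈ e, w ∈ S := by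
  induction e with | _ a b
  simp [restrictTo]

theorem exists_crossing {u w : V} (p : H.Walk u w) (hu : u ∉ S) (hw : w ∈ S) :
    ∃ y ∉ S, ∃ z ∈ S, H.Adj y z ∧ (restrictTo H Sᶜ).Reachable u y := by
  induction p with
  | nil => exact absurd hw hu
  | @cons a b c hab _ ih =>
    by_cases hb : b ∈ S
    · exact ⟨a, hu, b, hb, hab, .rfl⟩
    · obtain ⟨y, hy, z, hz, hyz, hr⟩ := ih hb hw
      have hab' : (restrictTo H Sᶜ).Adj a b := ⟨hab, hu, hb⟩
      exact ⟨y, hy, z, hz, hyz, hab'.reachable.trans hr⟩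

theorem isCycle_cons_append_cons {w x y z : V} {p : G.Walk y z} {q : G.Walk w x} (hp : p.IsPath)
    (hq : q.IsPath) (hpq : p.support.Disjoint q.support) (hwx : w ≠ x) (hxy : G.Adj x y)
    (hzw : G.Adj z w) : (Walk.cons hxy (p.append (Walk.cons hzw q))).IsCycle := by
  have hx : x ∉ p.support := fun h => hpq h q.end_mem_support
  rw [Walk.cons_isCycle_iff]
  constructor
  · rw [Walk.isPath_def, Walk.support_append, List.nodup_append']
    exact ⟨hp.support_nodup, hq.support_nodup, hpq⟩
  · simp only [Walk.edges_append, Walk.edges_cons, List.mem_append, List.mem_cons, not_or]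
    refine ⟨fun h => hx (p.fst_mem_support_of_mem_edges h), fun h => ?_,
      fun h => hpq p.start_mem_support (q.snd_mem_support_of_mem_edges h)⟩
    rcases Sym2.eq_iff.1 h with ⟨h, -⟩ | ⟨h, -⟩
    · exact hx (h ▸ p.end_mem_support)
    · exact hwx h.symm

theorem restrictTo_union {B : Set V} {x : V} (hxS : x ∈ S) (hxB : x ∈ B)
    (h : ∀ a ∈ S, ∀ b ∈ B, G.Adj a b → a = x ∨ b = x) :
    restrictTo G (S ∪ B) = restrictTo G S ⊔ restrictTo G B := by
  refine le_antisymm (fun a b => ?_) (sup_le (restrictTo_mono Set.subset_union_left)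
    (restrictTo_mono Set.subset_union_right))
  rintro ⟨hab, ha | ha, hb | hb⟩
  · exact .inl ⟨hab, ha, hb⟩
  · rcases h a ha b hb hab with rfl | rfl
    · exact .inr ⟨hab, hxB, hb⟩
    · exact .inl ⟨hab, ha, hxS⟩
  · rcases h b hb a ha hab.symm with rfl | rfl
    · exact .inr ⟨hab, ha, hxB⟩
    · exact .inl ⟨hab, hxS, hb⟩
  · exact .inr ⟨hab, ha, hb⟩

end Crossing

section Blocks

variable {V : Type} {G T : SimpleGraph V} {B B' : Set V} {e f : Sym2 V}

/-- The vertex set of the block of `G` which contains the edge `e`. -/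
def blockOf (G : SimpleGraph V) (e : Sym2 V) : Set V :=
  {w | ∃ f ∈ G.edgeSet, SameBlockEdge G e f ∧ w ∈ f}

theorem mem_blockOf_of_mem (he : e ∈ G.edgeSet) {w : V} (hw : w ∈ e) : w ∈ blockOf G e :=
  ⟨e, he, .inl rfl, hw⟩

theorem isBlockOf_blockOf (he : e ∈ G.edgeSet) : IsBlockOf G (blockOf G e) := ⟨e, he, rfl⟩

theorem IsBlockOf.exists_adj_of_mem (hB : IsBlockOf G B) {w : V} (hw : w ∈ B) :
    ∃ u ∈ B, G.Adj w u := by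
  obtain ⟨e, -, rfl⟩ := hB
  obtain ⟨f, hf, hef, hwf⟩ := hw
  obtain ⟨u, rfl⟩ := Sym2.mem_iff_exists.1 hwf
  exact ⟨u, ⟨_, hf, hef, by simp⟩, hf⟩

theorem IsBlockOf.exists_adj (hB : IsBlockOf G B) : ∃ a ∈ B, ∃ b ∈ B, G.Adj a b := by
  obtain ⟨e, he, rfl⟩ := id hB
  induction e with | _ a b
  exact ⟨a, mem_blockOf_of_mem he (by simp), hB.exists_adj_of_mem (mem_blockOf_of_mem he (by simp))⟩

section TwoTree

variable [Finite V]

theorem IsTwoTree.sameBlockEdge (h : IsTwoTree (G.induce B)) (he : e ∈ (restrictTo G B).edgeSet)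
    (hf : f ∈ (restrictTo G B).edgeSet) : SameBlockEdge G e f := by
  classical
  lift B to Finset V using B.toFinite
  refine or_iff_not_imp_left.2 fun hef => ?_
  obtain ⟨u, c, hc, -, hec, hfc⟩ := h.twoTreeOn.commonCycle he hf hef
  exact ⟨u, c, hc, hec, hfc⟩

theorem IsTwoTree.reachable_restrictTo (h : IsTwoTree (G.induce B)) {u v x : V} (hu : u ∈ B)
    (hv : v ∈ B) (hux : u ≠ x) (hvx : v ≠ x) :
    (restrictTo G {w | w ∈ B ∧ w ≠ x}).Reachable u v := by
  classical
  lift B to Finset V using B.toFinite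
  exact h.twoTreeOn.reachable x hu hv hux hvx

theorem IsBlockOf.subset_blockOf (hB : IsBlockOf G B) (h : IsTwoTree (G.induce B))
    (he : e ∈ (restrictTo G B).edgeSet) : B ⊆ blockOf G e := by
  intro w hw
  obtain ⟨u, hu, hwu⟩ := hB.exists_adj_of_mem hw
  exact ⟨s(w, u), hwu, h.sameBlockEdge he ⟨hwu, hw, hu⟩, by simp⟩

theorem IsBlockOf.eq_blockOf (hG : ∀ B, IsBlockOf G B → IsTwoTree (G.induce B))
    (hB : IsBlockOf G B) (he : e ∈ (restrictTo G B).edgeSet) : B = blockOf G e := by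
  have hsub := hB.subset_blockOf (hG B hB) he
  obtain ⟨e₀, he₀, rfl⟩ := id hB
  have heb := isBlockOf_blockOf (mem_edgeSet_restrictTo.1 he).1
  exact hsub.antisymm (heb.subset_blockOf (hG _ heb) (mem_edgeSet_restrictTo.2
    ⟨he₀, fun w hw => hsub (mem_blockOf_of_mem he₀ hw)⟩))

theorem IsBlockOf.eq_of_mem_edgeSet (hG : ∀ B, IsBlockOf G B → IsTwoTree (G.induce B))
    (hB : IsBlockOf G B) (hB' : IsBlockOf G B') (he : e ∈ (restrictTo G B).edgeSet)
    (he' : e ∈ (restrictTo G B').edgeSet) : B = B' :=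
  (hB.eq_blockOf hG he).trans (hB'.eq_blockOf hG he').symm

theorem IsSkeleton.isSpineOf (hG : ∀ B, IsBlockOf G B → IsTwoTree (G.induce B))
    (hT : IsSkeleton G T) (hB : IsBlockOf G B) : IsSpineOf G B (restrictTo T B).edgeSet := by
  obtain ⟨-, S, hS, hTS⟩ := hT
  have hSB : ∀ B, IsBlockOf G B → S B ⊆ (restrictTo G B).edgeSet := by
    intro B hB
    obtain ⟨_, _, p, -, -, -, -, -, -, hE⟩ := hS B hB
    rw [hE]
    rintro _ ⟨e, he, rfl⟩
    induction e with | _ a b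
    exact ⟨p.adj_of_mem_edges he, a.2, b.2⟩
  convert hS B hB
  ext e
  rw [mem_edgeSet_restrictTo, hTS]
  simp only [Set.mem_iUnion, Set.mem_ofPred_eq, exists_prop]
  constructor
  · rintro ⟨⟨B', hB', he⟩, heB⟩
    have heB' := hSB B' hB' he
    rwa [hB.eq_of_mem_edgeSet hG hB' (mem_edgeSet_restrictTo.2
      ⟨(mem_edgeSet_restrictTo.1 heB').1, heB⟩) heB']
  · exact fun he => ⟨⟨B, hB, he⟩, (mem_edgeSet_restrictTo.1 (hSB B hB he)).2⟩

end TwoTree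

theorem IsSpineOf.exists_isSpineWalk (h : IsSpineOf G B (restrictTo T B).edgeSet) :
    ∃ (s₁ s₂ : B) (p : (G.induce B).Walk s₁ s₂), IsSpineWalk G T B p := by
  obtain ⟨s₁, s₂, p, hne, hs₁, hs₂, hp, hlen, -, hE⟩ := h
  refine ⟨s₁, s₂, p, hne, hs₁, hs₂, hp, hlen, fun a b => ?_⟩
  have hinj := Sym2.map.injective (Subtype.val_injective : Function.Injective (Subtype.val : B → V))
  calc T.Adj a b ↔ Sym2.map Subtype.val s(a, b) ∈ (restrictTo T B).edgeSet := by simp [restrictTo]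
    _ ↔ s(a, b) ∈ p.edges := by rw [hE, hinj.mem_set_image, Set.mem_ofPred_eq]

theorem IsSpineOf.exists_isSpineWalk_of_isSimplicial [Finite V]
    (h : IsSpineOf G B (restrictTo T B).edgeSet) (hB : IsTwoPath (G.induce B)) {x : B}
    (hx : IsSimplicial (G.induce B) x) :
    ∃ (s : B) (p : (G.induce B).Walk x s), IsSpineWalk G T B p := by
  obtain ⟨s₁, s₂, p, hp⟩ := h.exists_isSpineWalk
  rcases hB.eq_or_eq_of_isSimplicial hp.ne hp.isSimplicial_left hp.isSimplicial_right hx with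
    rfl | rfl
  · exact ⟨s₂, p, hp⟩
  · exact ⟨s₁, p.reverse, hp.reverse⟩

theorem IsCutVertex.of_not_reachable (hG : G.Connected) {u v x : V} (hu : u ≠ x) (hv : v ≠ x)
    (h : ¬ (restrictTo G {w | w ≠ x}).Reachable u v) : IsCutVertex G x := by
  refine ⟨hG, fun hc => h ?_⟩
  let φ : G.induce {w | w ≠ x} →g restrictTo G {w | w ≠ x} :=
    ⟨Subtype.val, fun {a b} hab => ⟨hab, a.2, b.2⟩⟩
  exact (hc.preconnected ⟨u, hu⟩ ⟨v, hv⟩).map φ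

end Blocks

/-! ### Induction over the blocks -/

/-- `S` is a connected union of blocks of `G` containing `r`, or just `{r}`; it contains every block
with an edge inside `S`. -/
structure IsBlockUnion {V : Type} (G : SimpleGraph V) (r : V) (S : Set V) : Prop where
  root_mem : r ∈ S
  reachable : ∀ u ∈ S, (restrictTo G S).Reachable u r
  closed : ∀ B, IsBlockOf G B → ∀ a ∈ S ∩ B, ∀ b ∈ S ∩ B, G.Adj a b → B ⊆ S

/-- The block `B` of `G` meets `S` in `x` alone and no edge joins `S` and `B` outside `x`. -/
structure IsAttachedAt {V : Type} (G : SimpleGraph V) (S B : Set V) (x : V) : Prop where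
  isBlockOf : IsBlockOf G B
  mem_left : x ∈ S
  mem_right : x ∈ B
  inter_subset : S ∩ B ⊆ {x}
  eq_or_eq : ∀ a ∈ S, ∀ b ∈ B, G.Adj a b → a = x ∨ b = x

/-- The vertices at which the decomposition of `G` into blocks, rooted at `r`, can be taken apart:
the root and the cut-vertices. -/
def hinges {V : Type} (G : SimpleGraph V) (r : V) : Set V := {v | v = r ∨ IsCutVertex G v}

section BlockUnion

variable {V : Type} {G T : SimpleGraph V} {r x : V} {S B : Set V}

theorem isBlockUnion_singleton (G : SimpleGraph V) (r : V) : IsBlockUnion G r {r} where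
  root_mem := rfl
  reachable := by rintro u rfl; rfl
  closed := by
    rintro B - a ⟨rfl, -⟩ b ⟨rfl, -⟩ hab
    exact absurd rfl hab.ne

namespace IsBlockUnion

theorem eq_of_reachable_compl (hS : IsBlockUnion G r S) {w y z : V} (hx : x ∈ S) (hw : w ∈ S)
    (hy : y ∉ S) (hxy : G.Adj x y) (hzw : G.Adj z w)
    (hyz : (restrictTo G Sᶜ).Reachable y z) : w = x := by
  by_contra hwx
  obtain ⟨p, hp⟩ := hyz.exists_isPath
  obtain ⟨q, hq⟩ := ((hS.reachable w hw).trans (hS.reachable x hx).symm).exists_isPath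
  have hqS := forall_mem_support_of_support_subset support_restrictTo_subset q hw
  have hpS := forall_mem_support_of_support_subset support_restrictTo_subset p hy
  have hcycle := isCycle_cons_append_cons (hp.mapLe restrictTo_le) (hq.mapLe restrictTo_le)
    (by
      simp only [Walk.support_mapLe_eq_support]
      exact fun v hvp hvq => hpS v hvp (hqS v hvq))
    hwx hxy hzw
  cases q with
  | nil => exact hwx rfl
  | @cons _ v _ hwv q =>
    have hwv' : s(w, v) ∈ G.edgeSet := hwv.1
    have hblock : blockOf G s(w, v) ⊆ S := hS.closed _ (isBlockOf_blockOf hwv')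
      w ⟨hw, mem_blockOf_of_mem hwv' (by simp)⟩ v ⟨hwv.2.2, mem_blockOf_of_mem hwv' (by simp)⟩ hwv'
    exact hy (hblock ⟨s(x, y), hxy, .inr ⟨x, _, hcycle, by simp, by simp⟩, by simp⟩)

theorem not_reachable (hS : IsBlockUnion G r S) {w y : V} (hx : x ∈ S) (hw : w ∈ S) (hy : y ∉ S)
    (hxy : G.Adj x y) : ¬ (restrictTo G {v | v ≠ x}).Reachable y w := by
  rintro ⟨p⟩
  obtain ⟨z, -, w', hw', hzw, hyz⟩ := exists_crossing p hy hw
  have hle : restrictTo (restrictTo G {v | v ≠ x}) Sᶜ ≤ restrictTo G Sᶜ := fun _ _ h => ⟨h.1.1, h.2⟩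
  exact hzw.2.2 (hS.eq_of_reachable_compl hx hw' hy hxy hzw.1 (hyz.mono hle))

theorem exists_isAttachedAt [Finite V] (hS : IsBlockUnion G r S) (hG : G.Connected)
    (h2 : ∀ B, IsBlockOf G B → IsTwoTree (G.induce B)) (hne : S ≠ Set.univ) :
    ∃ B, ∃ x ∈ hinges G r, IsAttachedAt G S B x := by
  obtain ⟨u, hu⟩ := (Set.ne_univ_iff_exists_notMem S).1 hne
  obtain ⟨p⟩ := hG.preconnected u r
  obtain ⟨y, hy, x, hx, hyx, -⟩ := exists_crossing p hu hS.root_mem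
  have hxy : s(x, y) ∈ G.edgeSet := hyx.symm
  have hsep : ∀ w ∈ S, ¬ (restrictTo G {v | v ≠ x}).Reachable y w :=
    fun w hw => hS.not_reachable hx hw hy hxy
  have hreach : ∀ w ∈ blockOf G s(x, y), w ≠ x → (restrictTo G {v | v ≠ x}).Reachable y w :=
    fun w hw hwx => ((h2 _ (isBlockOf_blockOf hxy)).reachable_restrictTo
      (mem_blockOf_of_mem hxy (by simp)) hw hyx.ne hwx).mono (restrictTo_mono fun _ h => h.2)
  refine ⟨blockOf G s(x, y), x, ?_, isBlockOf_blockOf hxy, hx, mem_blockOf_of_mem hxy (by simp),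
    ?_, ?_⟩
  · exact or_iff_not_imp_left.2 fun hxr =>
      .of_not_reachable hG hyx.ne (Ne.symm hxr) (hsep r hS.root_mem)
  · exact fun w hw => by_contra fun hwx => hsep w hw.1 (hreach w hw.2 hwx)
  · intro a ha b hb hab
    by_contra! hne
    have hba : (restrictTo G {v | v ≠ x}).Adj b a := ⟨hab.symm, hne.2, hne.1⟩
    exact hsep a ha ((hreach b hb hne.2).trans hba.reachable)

end IsBlockUnion

namespace IsAttachedAt

theorem restrictTo_union (h : IsAttachedAt G S B x) (hTG : T ≤ G) :
    restrictTo T (S ∪ B) = restrictTo T S ⊔ restrictTo T B :=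
  _root_.restrictTo_union h.mem_left h.mem_right fun a ha b hb hab => h.eq_or_eq a ha b hb (hTG hab)

theorem support_restrictTo_union (h : IsAttachedAt G S B x) (hTG : T ≤ G) :
    (restrictTo T (S ∪ B)).support = (restrictTo T S).support ∪ (restrictTo T B).support := by
  ext v
  simp [h.restrictTo_union hTG, SimpleGraph.mem_support, exists_or]

theorem mem_edgeSet_or_mem_edgeSet (h : IsAttachedAt G S B x) {e : Sym2 V}
    (he : e ∈ (restrictTo G (S ∪ B)).edgeSet) :
    e ∈ (restrictTo G S).edgeSet ∨ e ∈ (restrictTo G B).edgeSet := by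
  rwa [h.restrictTo_union le_rfl, edgeSet_sup] at he

theorem not_subset (h : IsAttachedAt G S B x) : ¬ B ⊆ S := fun hBS => by
  obtain ⟨a, ha, b, hb, hab⟩ := h.isBlockOf.exists_adj
  exact hab.ne ((h.inter_subset ⟨hBS ha, ha⟩).trans (h.inter_subset ⟨hBS hb, hb⟩).symm)

theorem isBlockUnion_union [Finite V] (h : IsAttachedAt G S B x) (hS : IsBlockUnion G r S)
    (h2 : ∀ B, IsBlockOf G B → IsTwoTree (G.induce B)) : IsBlockUnion G r (S ∪ B) where
  root_mem := .inl hS.root_mem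
  reachable := by
    have hSr : ∀ u ∈ S, (restrictTo G (S ∪ B)).Reachable u r :=
      fun u hu => (hS.reachable u hu).mono (restrictTo_mono Set.subset_union_left)
    rintro u (hu | hu)
    · exact hSr u hu
    · obtain rfl | hux := eq_or_ne u x
      · exact hSr u h.mem_left
      obtain ⟨y, hy, hxy⟩ := h.isBlockOf.exists_adj_of_mem h.mem_right
      have hyx : (restrictTo G (S ∪ B)).Adj y x := ⟨hxy.symm, .inr hy, .inr h.mem_right⟩
      have huy := (h2 B h.isBlockOf).reachable_restrictTo hu hy hux hxy.ne'
      exact (huy.mono (restrictTo_mono fun _ hv => .inr hv.1)).trans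
        (hyx.reachable.trans (hSr x h.mem_left))
  closed := by
    intro B' hB' a ha b hb hab
    have hab' : s(a, b) ∈ (restrictTo G (S ∪ B)).edgeSet := ⟨hab, ha.1, hb.1⟩
    rcases h.mem_edgeSet_or_mem_edgeSet hab' with ⟨-, haS, hbS⟩ | habB
    · exact (hS.closed B' hB' a ⟨haS, ha.2⟩ b ⟨hbS, hb.2⟩ hab).trans Set.subset_union_left
    · have habB' : s(a, b) ∈ (restrictTo G B').edgeSet := ⟨hab, ha.2, hb.2⟩
      rw [hB'.eq_of_mem_edgeSet h2 h.isBlockOf habB' habB]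
      exact Set.subset_union_right

end IsAttachedAt

end BlockUnion

section Excess

variable {V : Type} {G T : SimpleGraph V} {r x : V} {S B : Set V}

/-- `(n - 1) + b - 2 e(T)` for the part of `G` inside `S`: the number of pebbles by which pebbling
there exceeds pebbling on its skeleton. -/
noncomputable def skeletonExcess (G T : SimpleGraph V) (S : Set V) : ℤ :=
  S.ncard - 1 + {B | IsBlockOf G B ∧ B ⊆ S}.ncard - 2 * (restrictTo T S).edgeSet.ncard

theorem restrictTo_singleton (G : SimpleGraph V) (r : V) : restrictTo G {r} = ⊥ := by
  ext a b
  simp only [restrictTo, Set.mem_singleton_iff, bot_adj, iff_false, not_and]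
  rintro hab rfl rfl
  exact hab.ne rfl

theorem skeletonExcess_singleton (G T : SimpleGraph V) (r : V) : skeletonExcess G T {r} = 0 := by
  have hblocks : {B | IsBlockOf G B ∧ B ⊆ {r}} = ∅ :=
    Set.eq_empty_of_forall_notMem fun B ⟨hB, hBr⟩ => by
      obtain ⟨a, ha, b, hb, hab⟩ := hB.exists_adj
      exact hab.ne ((hBr ha).trans (hBr hb).symm)
  rw [skeletonExcess, hblocks]
  simp [restrictTo_singleton]

namespace IsAttachedAt

variable [Finite V]

theorem ncard_union_add_one (h : IsAttachedAt G S B x) :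
    (S ∪ B).ncard + 1 = S.ncard + B.ncard := by
  have hinter : S ∩ B = {x} :=
    h.inter_subset.antisymm (Set.singleton_subset_iff.2 ⟨h.mem_left, h.mem_right⟩)
  rw [← Set.ncard_union_add_ncard_inter, hinter, Set.ncard_singleton]

theorem ncard_edgeSet_union (h : IsAttachedAt G S B x) (hTG : T ≤ G) :
    (restrictTo T (S ∪ B)).edgeSet.ncard =
      (restrictTo T S).edgeSet.ncard + (restrictTo T B).edgeSet.ncard := by
  rw [h.restrictTo_union hTG, edgeSet_sup, Set.ncard_union_eq]
  refine Set.disjoint_left.2 fun e => ?_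
  induction e with | _ a b
  rintro ⟨hab, ha, hb⟩ ⟨-, ha', hb'⟩
  exact hab.ne ((h.inter_subset ⟨ha, ha'⟩).trans (h.inter_subset ⟨hb, hb'⟩).symm)

theorem ncard_blocks_union (h : IsAttachedAt G S B x) (hS : IsBlockUnion G r S)
    (h2 : ∀ B, IsBlockOf G B → IsTwoTree (G.induce B)) :
    {B' | IsBlockOf G B' ∧ B' ⊆ S ∪ B}.ncard = {B' | IsBlockOf G B' ∧ B' ⊆ S}.ncard + 1 := by
  have hinsert : {B' | IsBlockOf G B' ∧ B' ⊆ S ∪ B} =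
      insert B {B' | IsBlockOf G B' ∧ B' ⊆ S} := by
    refine Set.Subset.antisymm (fun B' ⟨hB', hsub⟩ => ?_) (Set.insert_subset
      ⟨h.isBlockOf, Set.subset_union_right⟩
      fun B' hB' => ⟨hB'.1, hB'.2.trans Set.subset_union_left⟩)
    obtain ⟨a, ha, b, hb, hab⟩ := hB'.exists_adj
    have hab' : s(a, b) ∈ (restrictTo G (S ∪ B)).edgeSet := ⟨hab, hsub ha, hsub hb⟩
    rcases h.mem_edgeSet_or_mem_edgeSet hab' with ⟨-, haS, hbS⟩ | habB
    · exact .inr ⟨hB', hS.closed B' hB' a ⟨haS, ha⟩ b ⟨hbS, hb⟩ hab⟩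
    · have habB' : s(a, b) ∈ (restrictTo G B').edgeSet := ⟨hab, ha, hb⟩
      exact .inl (hB'.eq_of_mem_edgeSet h2 h.isBlockOf habB' habB)
  rw [hinsert, Set.ncard_insert_of_notMem fun hBS => h.not_subset hBS.2]

theorem skeletonExcess_union (h : IsAttachedAt G S B x) (hS : IsBlockUnion G r S)
    (h2 : ∀ B, IsBlockOf G B → IsTwoTree (G.induce B)) (hTG : T ≤ G) :
    skeletonExcess G T (S ∪ B) =
      skeletonExcess G T S + (B.ncard - 2 * (restrictTo T B).edgeSet.ncard) := by
  have := h.ncard_union_add_one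
  rw [skeletonExcess, skeletonExcess, h.ncard_blocks_union hS h2, h.ncard_edgeSet_union hTG]
  omega

end IsAttachedAt

end Excess

section Exchange

variable {V : Type} {G T : SimpleGraph V} {r x : V} {S B : Set V}

theorem IsSemiTwoTree.isSimplicial_of_mem_hinges (hG : IsSemiTwoTree G)
    (hr : IsSimplicial G r ∨ IsCutVertex G r) (hB : IsBlockOf G B) {v : V} (hv : v ∈ hinges G r)
    (hvB : v ∈ B) : IsSimplicial (G.induce B) ⟨v, hvB⟩ := by
  have hv' : IsSimplicial G v ∨ IsCutVertex G v := by
    obtain rfl | hv := hv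
    exacts [hr, .inr hv]
  rcases hv' with hv | hv
  · exact fun a ha b hb hab => hv (x := a) ha (y := b) hb (Subtype.coe_ne_coe.2 hab)
  · exact hG.2.2 v hv B hB hvB

variable [Fintype V] [DecidableEq V]

theorem Transfer.refl (H : SimpleGraph V) (X E : Set V) (r : V) : Transfer H X H X E r 0 :=
  fun C hC => ⟨C, hC, fun _ _ => le_rfl, by simp, fun _ h => h⟩

/-- Pebbling towards `r` inside `S` can be exchanged with pebbling on the part of the skeleton `T`
inside `S`, at the price of `skeletonExcess G T S` pebbles. The root is added to the vertices of the
skeleton on account of `S = {r}`. -/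
structure SkeletonExchange (G T : SimpleGraph V) (r : V) (S : Set V) : Prop where
  hinges_subset : hinges G r ∩ S ⊆ insert r (restrictTo T S).support
  transfer : Transfer (restrictTo G S) S (restrictTo T S) (insert r (restrictTo T S).support)
    (hinges G r) r (-skeletonExcess G T S)
  transfer_symm : Transfer (restrictTo T S) (insert r (restrictTo T S).support) (restrictTo G S) S
    (hinges G r) r (skeletonExcess G T S)

namespace SkeletonExchange

theorem singleton (G T : SimpleGraph V) (r : V) : SkeletonExchange G T r {r} where
  hinges_subset := fun _ hv => .inl hv.2
  transfer := by simpa [restrictTo_singleton, skeletonExcess_singleton] using Transfer.refl _ _ _ _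
  transfer_symm := by
    simpa [restrictTo_singleton, skeletonExcess_singleton] using Transfer.refl _ _ _ _

theorem union (hG : IsSemiTwoTree G) (hT : IsSkeleton G T)
    (hr : IsSimplicial G r ∨ IsCutVertex G r) (hS : IsBlockUnion G r S)
    (h : IsAttachedAt G S B x) (hx : x ∈ hinges G r) (hST : SkeletonExchange G T r S) :
    SkeletonExchange G T r (S ∪ B) := by
  have h2 := fun B hB => (hG.2.1 B hB).1
  have hB := hG.2.1 B h.isBlockOf
  have hsimp := fun v => hG.isSimplicial_of_mem_hinges hr h.isBlockOf (v := v)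
  obtain ⟨s, p, hp⟩ := (hT.isSpineOf h2 h.isBlockOf).exists_isSpineWalk_of_isSimplicial hB
    (hsimp x hx h.mem_right)
  have ends : ∀ v ∈ hinges G r, v ∈ B → v = x ∨ v = s := fun v hv hvB =>
    (hB.eq_or_eq_of_isSimplicial hp.ne hp.isSimplicial_left hp.isSimplicial_right
      (hsimp v hv hvB)).imp (congrArg Subtype.val) (congrArg Subtype.val)
  obtain ⟨hBT, hTB⟩ := hp.transfer hB hT.1
  have hTS : insert r (restrictTo T S).support ⊆ S :=
    Set.insert_subset hS.root_mem support_restrictTo_subset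
  have hxT : x ∈ insert r (restrictTo T S).support := hST.hinges_subset ⟨hx, h.mem_left⟩
  have hexcess := h.skeletonExcess_union hS h2 hT.1
  have hsupp : insert r (restrictTo T (S ∪ B)).support =
      insert r (restrictTo T S).support ∪ (restrictTo T B).support := by
    rw [h.support_restrictTo_union hT.1, Set.insert_union]
  constructor
  · rintro v ⟨hv, hvS | hvB⟩ <;> rw [hsupp]
    · exact .inl (hST.hinges_subset ⟨hv, hvS⟩)
    · rcases ends v hv hvB with rfl | rfl
      exacts [.inl hxT, .inr hp.right_mem_support]
  · rw [hexcess, hsupp, h.restrictTo_union le_rfl, h.restrictTo_union hT.1, neg_add]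
    exact hST.transfer.glue hBT (Set.subset_insert _ _) subset_rfl h.mem_left hxT hx
      (Set.mem_insert _ _)
      ((Set.inter_subset_inter hTS support_restrictTo_subset).trans h.inter_subset)
      fun v hv hvB hvx => (ends v hv hvB).resolve_left hvx
  · rw [hexcess, hsupp, h.restrictTo_union le_rfl, h.restrictTo_union hT.1]
    exact hST.transfer_symm.glue hTB support_restrictTo_subset support_restrictTo_subset hxT
      h.mem_left hx hS.root_mem h.inter_subset
      fun v hv hvB hvx => (ends v hv (support_restrictTo_subset hvB)).resolve_left hvx

theorem univ (hG : IsSemiTwoTree G) (hT : IsSkeleton G T)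
    (hr : IsSimplicial G r ∨ IsCutVertex G r) : SkeletonExchange G T r Set.univ := by
  obtain ⟨S, hS⟩ := (Set.toFinite
    {S | IsBlockUnion G r S ∧ SkeletonExchange G T r S}).exists_maximal
      ⟨_, isBlockUnion_singleton G r, .singleton G T r⟩
  obtain ⟨hSu, hST⟩ := hS.prop
  have h2 := fun B hB => (hG.2.1 B hB).1
  obtain rfl | hne := eq_or_ne S Set.univ
  · exact hST
  obtain ⟨B, x, hx, h⟩ := hSu.exists_isAttachedAt hG.1 h2 hne
  have hle := hS.le_of_ge ⟨h.isBlockUnion_union hSu h2, hST.union hG hT hr hSu h hx⟩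
    Set.subset_union_left
  exact absurd (Set.subset_union_right.trans hle) h.not_subset

end SkeletonExchange

end Exchange

/-! ### Pebbling numbers -/

section PebblingNumber

variable {V : Type} [Fintype V] [DecidableEq V] {G H : SimpleGraph V} {X : Set V} {r : V}
  {s t : ℕ}

/-- Every configuration of at least `s` pebbles on `X` can place `t` pebbles on `r` along `H`. The
`t`-pebbling number of the graph induced on `X` is the least such `s`. -/
def IsSufficient (H : SimpleGraph V) (X : Set V) (r : V) (t s : ℕ) : Prop :=
  ∀ C : V → ℕ, (∀ v ∉ X, C v = 0) → s ≤ ∑ v, C v → FlowReach H C (Pi.single r t)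

theorem Transfer.isSufficient {H₁ H₂ : SimpleGraph V} {X₁ X₂ E : Set V} {c : ℤ} {m : ℕ}
    (h : Transfer H₁ X₁ H₂ X₂ E r c) (hs : IsSufficient H₂ X₂ r t s) (hm : (s : ℤ) - c ≤ m) :
    IsSufficient H₁ X₁ r t m := by
  intro C hC hmC
  obtain ⟨C', hC', -, hsum, hreach⟩ := h C hC
  exact hreach t (hs C' hC' (by omega))

theorem not_isSufficient_zero (H : SimpleGraph V) (X : Set V) (r : V) (ht : 1 ≤ t) :
    ¬ IsSufficient H X r t 0 := fun h => by
  have := (h 0 (fun _ _ => rfl) (Nat.zero_le _)).le_sum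
  simp only [Pi.zero_apply, Finset.sum_const_zero] at this
  omega

theorem exists_isSufficient (hG : G.Connected) (X : Set V) (r : V) (t : ℕ) :
    ∃ s, IsSufficient G X r t s := by
  refine ⟨∑ v, t * 2 ^ G.dist v r, fun C _ hC => ?_⟩
  obtain ⟨v, -, hv⟩ := Finset.exists_le_of_sum_le ⟨r, Finset.mem_univ r⟩ hC
  obtain ⟨p, hp⟩ := hG.exists_walk_length_eq_dist v r
  exact (FlowReach.of_walk p t).mono (single_le_iff_le_apply.2 (hp ▸ hv)) le_rfl

theorem tSolvable_induce_iff (hH : H.support ⊆ X) (hr : r ∈ X) {C : V → ℕ} :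
    TSolvable (H.induce X) (fun v => C v) ⟨r, hr⟩ t ↔ FlowReach H C (Pi.single r t) := by
  classical
  have hsingle : (Pi.single ⟨r, hr⟩ t : X → ℕ) = fun v : X => (Pi.single r t : V → ℕ) v := by
    ext v
    simp [Pi.single_apply, Subtype.ext_iff]
  rw [tSolvable_iff_flowReach, hsingle, FlowReach.induce_iff hH]
  intro v hv
  have hvr : v ≠ r := fun h => hv (h ▸ hr)
  simp [hvr]

theorem isSufficient_iff_forall_tSolvable (hH : H.support ⊆ X) (hr : r ∈ X) :
    IsSufficient H X r t s ↔ ∀ C : X → ℕ, s ≤ ∑ᶠ v, C v → TSolvable (H.induce X) C ⟨r, hr⟩ t := by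
  classical
  constructor
  · intro h C hC
    obtain ⟨D, rfl, hD⟩ : ∃ D : V → ℕ, (fun v : X => D v) = C ∧ ∀ v ∉ X, D v = 0 :=
      ⟨fun v => if hv : v ∈ X then C ⟨v, hv⟩ else 0, by simp, fun v hv => dif_neg hv⟩
    rw [finsum_eq_sum_of_fintype, sum_coe_of_forall_notMem_eq_zero hD] at hC
    exact (tSolvable_induce_iff hH hr).2 (h D hD hC)
  · intro h C hC hs
    rw [← sum_coe_of_forall_notMem_eq_zero hC, ← finsum_eq_sum_of_fintype] at hs
    exact (tSolvable_induce_iff hH hr).1 (h _ hs)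

theorem piT_induce_eq_sInf (hH : H.support ⊆ X) (hr : r ∈ X) (t : ℕ) :
    piT (H.induce X) ⟨r, hr⟩ t = sInf {s | IsSufficient H X r t s} :=
  congrArg sInf (Set.ext fun _ => (isSufficient_iff_forall_tSolvable hH hr).symm)

theorem piT_eq_sInf (G : SimpleGraph V) (r : V) (t : ℕ) :
    piT G r t = sInf {s | IsSufficient G Set.univ r t s} := by
  refine congrArg sInf (Set.ext fun s => forall_congr' fun C => ?_)
  simp [finsum_eq_sum_of_fintype, tSolvable_iff_flowReach]

theorem Transfer.nonempty_isSufficient {H₁ H₂ : SimpleGraph V} {X₁ X₂ E : Set V} {c : ℤ}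
    (h : Transfer H₁ X₁ H₂ X₂ E r c) (hne : {s | IsSufficient H₂ X₂ r t s}.Nonempty) :
    {s | IsSufficient H₁ X₁ r t s}.Nonempty :=
  ⟨_, h.isSufficient hne.some_mem (Int.self_le_toNat _)⟩

theorem Transfer.sInf_isSufficient_le {H₁ H₂ : SimpleGraph V} {X₁ X₂ E : Set V} {c : ℤ}
    (h : Transfer H₁ X₁ H₂ X₂ E r c) (ht : 1 ≤ t) (hne : {s | IsSufficient H₂ X₂ r t s}.Nonempty) :
    ((sInf {s | IsSufficient H₁ X₁ r t s} : ℕ) : ℤ) ≤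
      (sInf {s | IsSufficient H₂ X₂ r t s} : ℕ) - c := by
  have hs := Nat.sInf_mem hne
  have hpos : 0 ≤ ((sInf {s | IsSufficient H₂ X₂ r t s} : ℕ) : ℤ) - c := by
    by_contra! hneg
    exact not_isSufficient_zero H₁ X₁ r ht (h.isSufficient hs hneg.le)
  refine (Int.le_toNat hpos).1 (Nat.sInf_le ?_)
  exact h.isSufficient hs (Int.self_le_toNat _)

end PebblingNumber

/-- for a semi-2-tree `G` on `n` vertices with skeleton `T`, `b`
blocks, and `r` a simplicial vertex or cut-vertex of `G` (which then lies on the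
skeleton), `π_t(G,r) = π_t(T,r) + (n−1) + b − 2e(T)`, where the skeleton is viewed
as a tree on its support. -/
theorem semiTwoTree_pebbling_formula {V : Type} [Fintype V] (G T : SimpleGraph V)
    (hG : IsSemiTwoTree G) (hT : IsSkeleton G T) (r : V)
    (hr : IsSimplicial G r ∨ IsCutVertex G r) (hrT : r ∈ T.support)
    (n b t : ℕ) (hn : Fintype.card V = n)
    (hb : {B : Set V | IsBlockOf G B}.ncard = b) (ht : 1 ≤ t) :
    piT G r t =
      piT (T.induce T.support) ⟨r, hrT⟩ t + (n - 1) + b - 2 * T.edgeSet.ncard := by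
  classical
  have hn_pos : 1 ≤ n := hn ▸ Fintype.card_pos_iff.2 ⟨r⟩
  have hexcess : skeletonExcess G T Set.univ = n - 1 + b - 2 * T.edgeSet.ncard := by
    simp [skeletonExcess, restrictTo_univ, hn, hb]
  obtain ⟨-, hGT, hTG⟩ := SkeletonExchange.univ hG hT hr
  rw [restrictTo_univ, restrictTo_univ, Set.insert_eq_of_mem hrT] at hGT hTG
  have hsuff := exists_isSufficient hG.1 Set.univ r t
  have hle := hGT.sInf_isSufficient_le ht (hTG.nonempty_isSufficient hsuff)
  have hge := hTG.sInf_isSufficient_le ht hsuff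
  rw [piT_eq_sInf, piT_induce_eq_sInf subset_rfl]
  omega
end

section
/- Let T be a tree of diameter d, r* a vertex with ecc(r*) = d, and r a vertex with ecc(r) < d. Then π_t(T,r) ≤ π_t(T,r*) − 2^{d−2}. -/
open SimpleGraph

/-!
Root the tree at `r` and let a pebble at `v` weigh `2 ^ b`, where `b` is the height of the branch
at `v`. A step towards the root never loses weight, and when no such step is left, an unsolved
configuration lies below the saturated one, with `t - 1` pebbles on `r` and one on every other
vertex. Conversely, replacing a pebble by two pebbles on its tallest child keeps both the weight and
the unsolvability, and turns the saturated configuration into one with every pebble on a leaf, where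
it weighs `1`. Hence `piT T r t` is one more than the weight of the saturated configuration, i.e.
`t * 2 ^ eccG T r + excess T r + 1`.

Moving the root across an edge changes only the branch heights of its two ends. A step from `v` to
a neighbour `u` on the way to the centre raises the excess by `2 ^ b`, where `b ≤ eccG T v - 2` is
the height of the branch at `v` seen from `u`, except that the excess does not change if `u` and `v`
are both central. The exponents strictly decrease on the way from `s` to the centre, so a geometric
sum bounds the excess of any `r` by `excess T s + 2 ^ (eccG T s - 2)`. On the other hand, the
leading term drops by at least `2 ^ (eccG T s - 1)` when `eccG T r < eccG T s`.
-/

namespace TreePebbling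

section RootedDistance

variable {V : Type*} {G T : SimpleGraph V}

/-- `c` is a child of `p` when `G` is rooted at `r`. Read from the other end, `p` is the first
vertex after `c` on a shortest walk from `c` to `r`. -/
structure IsChild (G : SimpleGraph V) (r p c : V) : Prop where
  adj : G.Adj p c
  dist_eq : G.dist r c = G.dist r p + 1

theorem IsChild.ne_root {r p c : V} (h : IsChild G r p c) : c ≠ r := by
  rintro rfl
  simpa using h.dist_eq

theorem exists_isChild (hG : G.Connected) {r c : V} (hc : c ≠ r) : ∃ p, IsChild G r p c := by
  obtain ⟨walk, hwalk⟩ := hG.exists_walk_length_eq_dist c r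
  obtain ⟨p, hcp, tail, rfl⟩ := Walk.exists_eq_cons_of_ne hc walk
  have htail := dist_le tail
  have hstep := hcp.diff_dist_adj (u := r)
  rw [Walk.length_cons] at hwalk
  rw [G.dist_comm] at htail hwalk
  exact ⟨p, hcp.symm, by omega⟩

theorem IsChild.dist_le_dist_add_one {r p c : V} (h : IsChild G r p c) (w : V) :
    G.dist p w ≤ G.dist c w + 1 := by
  have := h.adj.diff_dist_adj (u := w)
  rw [G.dist_comm (u := p), G.dist_comm (u := c)]
  omega

theorem isChild_or_isChild_of_adj (hT : T.IsTree) (r : V) {u v : V} (h : T.Adj u v) :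
    IsChild T r u v ∨ IsChild T r v u :=
  (hT.dist_eq_dist_add_one_of_adj r h).symm.imp (⟨h, ·⟩) (⟨h.symm, ·⟩)

theorem IsChild.parent_unique (hT : T.IsTree) {r p p' c : V} (h : IsChild T r p c)
    (h' : IsChild T r p' c) : p = p' := by
  have concat_isPath {q : V} (hq : IsChild T r q c) (walk : T.Walk r q)
      (hwalk : walk.length = T.dist r q) : (walk.concat hq.adj).IsPath :=
    Walk.isPath_of_length_eq_dist _ (by rw [Walk.length_concat, hwalk, hq.dist_eq])
  obtain ⟨walk, hwalk⟩ := hT.connected.exists_walk_length_eq_dist r p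
  obtain ⟨walk', hwalk'⟩ := hT.connected.exists_walk_length_eq_dist r p'
  have heq := congrArg Subtype.val ((hT.isAcyclic.subsingleton_path r c).elim
    ⟨_, concat_isPath h walk hwalk⟩ ⟨_, concat_isPath h' walk' hwalk'⟩)
  exact (Walk.concat_inj heq).1

/-- The edge `p u` separates `r` from `w`. -/
theorem IsChild.dist_eq_dist_add_dist (hT : T.IsTree) {r p u w : V} (hr : IsChild T r p u)
    (hw : IsChild T w u p) : T.dist r w = T.dist r u + T.dist u w := by
  induction hn : T.dist u w generalizing p u with
  | zero =>
    obtain rfl := hT.connected.dist_eq_zero_iff.mp hn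
    simp
  | succ n ih =>
    have hne : u ≠ w := by
      rintro rfl
      simp at hn
    obtain ⟨x, hx⟩ := exists_isChild hT.connected hne
    have hux : IsChild T r u x := by
      refine (isChild_or_isChild_of_adj hT r hx.adj.symm).resolve_right fun hxu => ?_
      obtain rfl := hr.parent_unique hT hxu
      have := hw.dist_eq
      have := hx.dist_eq
      omega
    have hxw : T.dist u w = T.dist x w + 1 := by
      rw [T.dist_comm, hx.dist_eq, T.dist_comm]
    have := ih hux hx (by omega)
    have := hux.dist_eq
    omega

end RootedDistance

section BranchHeight

variable {V : Type*} {G T : SimpleGraph V}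

/-- The height of the branch at `u` when `G` is rooted at `r`, i.e. the eccentricity of `u` within
the set of vertices `w` such that `u` lies on a shortest walk from `r` to `w`. -/
noncomputable def branchHeight (G : SimpleGraph V) (r u : V) : ℕ :=
  ⨆ w : {w // G.dist r w = G.dist r u + G.dist u w}, G.dist u w

variable [Finite V]

theorem le_branchHeight {r u w : V} (h : G.dist r w = G.dist r u + G.dist u w) :
    G.dist u w ≤ branchHeight G r u :=
  le_ciSup (f := fun w : {w // G.dist r w = G.dist r u + G.dist u w} => G.dist u w)
    (Finite.bddAbove_range _) ⟨w, h⟩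

theorem exists_dist_eq_branchHeight (G : SimpleGraph V) (r u : V) :
    ∃ w, G.dist r w = G.dist r u + G.dist u w ∧ G.dist u w = branchHeight G r u := by
  have : Nonempty {w // G.dist r w = G.dist r u + G.dist u w} := ⟨u, by simp⟩
  obtain ⟨⟨w, hw⟩, h⟩ := exists_eq_ciSup_of_finite
    (f := fun w : {w // G.dist r w = G.dist r u + G.dist u w} => G.dist u w)
  exact ⟨w, hw, h⟩

theorem IsChild.branchHeight_lt (hG : G.Connected) {r p c : V} (h : IsChild G r p c) :
    branchHeight G r c < branchHeight G r p := by
  obtain ⟨w, hw, hheight⟩ := exists_dist_eq_branchHeight G r c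
  have hstep := h.dist_le_dist_add_one w
  have htri := hG.dist_triangle (u := r) (v := p) (w := w)
  have hdist := h.dist_eq
  have := le_branchHeight (show G.dist r w = G.dist r p + G.dist p w by omega)
  omega

theorem exists_isChild_branchHeight_eq (hG : G.Connected) {r p : V}
    (hp : branchHeight G r p ≠ 0) :
    ∃ c, IsChild G r p c ∧ branchHeight G r p = branchHeight G r c + 1 := by
  obtain ⟨w, hw, hheight⟩ := exists_dist_eq_branchHeight G r p
  have hne : p ≠ w := by
    rintro rfl
    exact hp (by simpa using hheight.symm)
  obtain ⟨c, hc⟩ := exists_isChild hG hne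
  have hcw : G.dist p w = G.dist c w + 1 := by
    rw [G.dist_comm, hc.dist_eq, G.dist_comm]
  have htri := hG.dist_triangle (u := r) (v := c) (w := w)
  have hstep := hc.adj.diff_dist_adj (u := r)
  have hchild : IsChild G r p c := ⟨hc.adj.symm, by omega⟩
  have hle := le_branchHeight (show G.dist r w = G.dist r c + G.dist c w by omega)
  have hlt := hchild.branchHeight_lt hG
  exact ⟨c, hchild, by omega⟩

theorem IsChild.branchHeight_eq (hT : T.IsTree) {r p u : V} (h : IsChild T r p u) :
    branchHeight T r u = branchHeight T p u := by
  have hpu : T.dist p u = 1 := dist_eq_one_iff_adj.mpr h.adj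
  apply le_antisymm
  · obtain ⟨w, hw, hheight⟩ := exists_dist_eq_branchHeight T r u
    have htri := hT.connected.dist_triangle (u := r) (v := p) (w := w)
    have hstep := h.dist_le_dist_add_one w
    have hdist := h.dist_eq
    rw [← hheight]
    exact le_branchHeight (by omega)
  · obtain ⟨w, hw, hheight⟩ := exists_dist_eq_branchHeight T p u
    have hback : IsChild T w u p :=
      ⟨h.adj.symm, by rw [T.dist_comm, hw, hpu, T.dist_comm, add_comm]⟩
    rw [← hheight]
    exact le_branchHeight (h.dist_eq_dist_add_dist hT hback)

theorem branchHeight_eq_of_adj (hT : T.IsTree) {r r' u : V} (h : T.Adj r r') (hr : u ≠ r)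
    (hr' : u ≠ r') : branchHeight T r u = branchHeight T r' u := by
  wlog hcloser : IsChild T u r' r generalizing r r'
  · exact (this h.symm hr' hr
      ((isChild_or_isChild_of_adj hT u h).resolve_right hcloser)).symm
  obtain ⟨p, hp⟩ := exists_isChild hT.connected hr'
  have hp_r : IsChild T r p u := by
    have htri := hT.connected.dist_triangle (u := r) (v := p) (w := u)
    have hstep := hcloser.adj.diff_dist_adj (u := p)
    have hdist := hp.dist_eq
    have hdist' := hcloser.dist_eq
    have hpu : T.dist p u = 1 := dist_eq_one_iff_adj.mpr hp.adj
    rw [T.dist_comm (u := p), T.dist_comm (u := p)] at hstep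
    rw [T.dist_comm (u := u), T.dist_comm (u := u)] at hdist'
    exact ⟨hp.adj, by omega⟩
  rw [hp_r.branchHeight_eq hT, hp.branchHeight_eq hT]

end BranchHeight

section Eccentricity

variable {V : Type} {G T : SimpleGraph V}

theorem branchHeight_self (G : SimpleGraph V) (r : V) : branchHeight G r r = eccG G r :=
  (Equiv.subtypeUnivEquiv fun _ => by simp).iSup_congr fun _ => rfl

variable [Finite V]

theorem dist_le_eccG (G : SimpleGraph V) (u w : V) : G.dist u w ≤ eccG G u :=
  le_ciSup (Finite.bddAbove_range _) w

theorem exists_dist_eq_eccG (G : SimpleGraph V) (u : V) : ∃ w, G.dist u w = eccG G u :=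
  have : Nonempty V := ⟨u⟩
  exists_eq_ciSup_of_finite

theorem dist_add_branchHeight_le_eccG (G : SimpleGraph V) (r u : V) :
    G.dist r u + branchHeight G r u ≤ eccG G r := by
  obtain ⟨w, hw, hheight⟩ := exists_dist_eq_branchHeight G r u
  rw [← hheight, ← hw]
  exact dist_le_eccG G r w

theorem eccG_eq_max_of_adj (hT : T.IsTree) {u v : V} (h : T.Adj u v) :
    eccG T u = max (branchHeight T v u) (branchHeight T u v + 1) := by
  have huv : T.dist u v = 1 := dist_eq_one_iff_adj.mpr h
  have hvu : T.dist v u = 1 := dist_eq_one_iff_adj.mpr h.symm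
  apply le_antisymm
  · obtain ⟨w, hw⟩ := exists_dist_eq_eccG T u
    rw [← hw, le_max_iff]
    have hside := hT.dist_eq_dist_add_one_of_adj w h.symm
    rw [T.dist_comm, T.dist_comm (v := u)] at hside
    refine hside.imp (fun hnear => le_branchHeight (by omega)) fun hfar => ?_
    have := le_branchHeight (show T.dist u w = T.dist u v + T.dist v w by omega)
    omega
  · refine max_le ?_ ?_
    · obtain ⟨w, -, hheight⟩ := exists_dist_eq_branchHeight T v u
      exact hheight ▸ dist_le_eccG T u w
    · rw [add_comm, ← huv]
      exact dist_add_branchHeight_le_eccG T u v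

theorem IsChild.branchHeight_lt_eccG (hT : T.IsTree) {r p u : V} (h : IsChild T r p u) :
    branchHeight T p u < eccG T r := by
  have := dist_add_branchHeight_le_eccG T r u
  rw [h.dist_eq, h.branchHeight_eq hT] at this
  omega

theorem IsChild.branchHeight_le_of_eccG_le (hT : T.IsTree) {r u v : V} (h : IsChild T r u v)
    (hle : eccG T r ≤ eccG T v) : branchHeight T u v ≤ branchHeight T v u := by
  have := h.branchHeight_lt_eccG hT
  have := eccG_eq_max_of_adj hT h.adj.symm
  omega

theorem IsChild.branchHeight_lt_of_eccG_lt (hT : T.IsTree) {r u v : V} (h : IsChild T r u v)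
    (hlt : eccG T r < eccG T v) : branchHeight T u v < branchHeight T v u := by
  have := h.branchHeight_lt_eccG hT
  have := eccG_eq_max_of_adj hT h.adj.symm
  omega

theorem two_le_eccG_of_eccG_lt (hT : T.IsTree) {r s : V} (h : eccG T r < eccG T s) :
    2 ≤ eccG T s := by
  have hsr : s ≠ r := by
    rintro rfl
    exact h.false
  obtain ⟨u, hu⟩ := exists_isChild hT.connected hsr
  have hlt := hu.branchHeight_lt_of_eccG_lt hT h
  have hecc := eccG_eq_max_of_adj hT hu.adj.symm
  omega

end Eccentricity

section Move

variable {V : Type*} [DecidableEq V]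

/-- `C'` arises from `C` by a pebbling step from `u` to `v`, regardless of whether `u` and `v` are
adjacent. The pebbles are added on the opposite sides to avoid truncated subtraction. -/
def IsMove (u v : V) (C C' : V → ℕ) : Prop :=
  C' + 2 • Pi.single u 1 = C + Pi.single v 1

theorem IsMove.apply {u v : V} {C C' : V → ℕ} (h : IsMove u v C C') (w : V) :
    C' w + 2 * (Pi.single u 1 : V → ℕ) w = C w + (Pi.single v 1 : V → ℕ) w :=
  congrFun h w

theorem IsMove.apply_source {u v : V} {C C' : V → ℕ} (h : IsMove u v C C') (huv : u ≠ v) :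
    C' u + 2 = C u := by
  simpa [huv] using h.apply u

theorem exists_isMove_from {u : V} {C : V → ℕ} (h : 2 ≤ C u) (v : V) :
    ∃ C', IsMove u v C C' := by
  refine ⟨C + Pi.single v 1 - 2 • Pi.single u 1, tsub_add_cancel_of_le fun w => ?_⟩
  by_cases hw : w = u
  · subst hw
    simpa using Nat.le_add_right_of_le h
  · simp [hw]

theorem exists_isMove_to {v : V} {C' : V → ℕ} (h : 1 ≤ C' v) (u : V) :
    ∃ C, IsMove u v C C' := by
  refine ⟨C' + 2 • Pi.single u 1 - Pi.single v 1, (tsub_add_cancel_of_le fun w => ?_).symm⟩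
  by_cases hw : w = v
  · subst hw
    simpa using Nat.le_add_right_of_le h
  · simp [hw]

theorem IsMove.sum_mul_add [Fintype V] {u v : V} {C C' : V → ℕ} (h : IsMove u v C C')
    (f : V → ℕ) : ∑ w, f w * C' w + 2 * f u = ∑ w, f w * C w + f v := by
  have := congrArg (fun D : V → ℕ => ∑ w, f w * D w) h
  simpa [mul_add, Finset.sum_add_distrib, Pi.single_apply, mul_comm] using this

theorem IsMove.sum_add_one [Fintype V] {u v : V} {C C' : V → ℕ} (h : IsMove u v C C') :
    ∑ w, C' w + 1 = ∑ w, C w := by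
  simpa [← add_assoc] using h.sum_mul_add 1

end Move

section Weight

variable {V : Type*} [Fintype V] {G : SimpleGraph V}

/-- The total weight of a configuration when a pebble at `v` weighs `2 ^ branchHeight G r v`. -/
noncomputable def weight (G : SimpleGraph V) (r : V) (C : V → ℕ) : ℕ :=
  ∑ v, 2 ^ branchHeight G r v * C v

theorem sum_le_weight (G : SimpleGraph V) (r : V) (C : V → ℕ) : ∑ v, C v ≤ weight G r C :=
  Finset.sum_le_sum fun _ _ => Nat.le_mul_of_pos_left _ (by positivity)

theorem weight_mono (G : SimpleGraph V) (r : V) : Monotone (weight G r) :=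
  fun _ _ h => Finset.sum_le_sum fun v _ => Nat.mul_le_mul_left _ (h v)

theorem IsMove.weight_le_of_isChild [DecidableEq V] (hG : G.Connected) {r p c : V} {C C' : V → ℕ}
    (h : IsMove c p C C') (hchild : IsChild G r p c) : weight G r C ≤ weight G r C' := by
  have hpow : 2 * 2 ^ branchHeight G r c ≤ 2 ^ branchHeight G r p := by
    rw [← pow_succ']
    exact Nat.pow_le_pow_right two_pos (hchild.branchHeight_lt hG)
  have : weight G r C' + _ = weight G r C + _ := h.sum_mul_add fun v => 2 ^ branchHeight G r v
  omega

theorem IsMove.weight_eq_of_branchHeight_eq [DecidableEq V] {r p c : V} {C C' : V → ℕ}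
    (h : IsMove c p C C') (hheight : branchHeight G r p = branchHeight G r c + 1) :
    weight G r C = weight G r C' := by
  have : weight G r C' + _ = weight G r C + _ := h.sum_mul_add fun v => 2 ^ branchHeight G r v
  rw [hheight, pow_succ'] at this
  exact (Nat.add_right_cancel this).symm

end Weight

section Blocking

variable {V : Type*} [Fintype V] {G T : SimpleGraph V}

open Classical in
/-- The sum of the values of `m` at the children of `u`. -/
noncomputable def childSum (G : SimpleGraph V) (r : V) (m : V → ℕ) (u : V) : ℕ :=
  ∑ c with IsChild G r u c, m c

theorem childSum_add_single [DecidableEq V] (hT : T.IsTree) {r p c : V} (h : IsChild T r p c)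
    (m : V → ℕ) :
    childSum T r (m + Pi.single c 1) = childSum T r m + Pi.single p 1 := by
  have hparent (u : V) : IsChild T r u c ↔ u = p :=
    ⟨fun hu => hu.parent_unique hT h, fun hu => hu ▸ h⟩
  funext u
  simp [childSum, Finset.sum_add_distrib, Pi.single_apply, hparent]

/-- A certificate that fewer than `t` pebbles can gather at `r`: if `m c` bounds the number of
pebbles that cross from `c` to its parent, then `C u + childSum G r m u` bounds the number of
pebbles that `u` can collect. -/
def IsBlockedBy (G : SimpleGraph V) (r : V) (t : ℕ) (m C : V → ℕ) : Prop :=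
  C r + childSum G r m r < t ∧ ∀ u, u ≠ r → C u + childSum G r m u ≤ 2 * m u + 1

/-- `C` admits a certificate of not being `t`-fold `r`-solvable. -/
def IsBlocked (G : SimpleGraph V) (r : V) (t : ℕ) (C : V → ℕ) : Prop :=
  ∃ m, IsBlockedBy G r t m C

theorem IsBlocked.mono {r : V} {t : ℕ} {C D : V → ℕ} (hD : IsBlocked G r t D) (h : C ≤ D) :
    IsBlocked G r t C := by
  obtain ⟨m, hroot, hm⟩ := hD
  exact ⟨m, (Nat.add_le_add_right (h r) _).trans_lt hroot,
    fun u hu => (Nat.add_le_add_right (h u) _).trans (hm u hu)⟩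

theorem IsMove.isBlockedBy_add_single_iff [DecidableEq V] (hT : T.IsTree) {r p c : V} {t : ℕ}
    {m C C' : V → ℕ} (h : IsMove c p C C') (hchild : IsChild T r p c) :
    IsBlockedBy T r t (m + Pi.single c 1) C ↔ IsBlockedBy T r t m C' := by
  have hroot : (Pi.single c 1 : V → ℕ) r = 0 := Pi.single_eq_of_ne hchild.ne_root.symm 1
  rw [IsBlockedBy, IsBlockedBy, childSum_add_single hT hchild]
  simp only [Pi.add_apply]
  refine and_congr ?_ (forall₂_congr fun u _ => ?_)
  · have := h.apply r
    omega
  · have := h.apply u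
    omega

theorem IsMove.isBlocked_iff [DecidableEq V] (hT : T.IsTree) {r p c : V} {t : ℕ} {C C' : V → ℕ}
    (h : IsMove c p C C') (hchild : IsChild T r p c) :
    IsBlocked T r t C ↔ IsBlocked T r t C' := by
  refine ⟨fun ⟨m, hm⟩ => ?_, fun ⟨m, hm⟩ => ⟨_, (h.isBlockedBy_add_single_iff hT hchild).mpr hm⟩⟩
  have hone : 1 ≤ m c := by
    have := h.apply_source hchild.adj.ne'
    have := hm.2 c hchild.ne_root
    omega
  have hle : Pi.single c 1 ≤ m := update_le_iff.mpr ⟨hone, fun _ _ => Nat.zero_le _⟩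
  rw [← tsub_add_cancel_of_le hle] at hm
  exact ⟨_, (h.isBlockedBy_add_single_iff hT hchild).mp hm⟩

theorem IsBlocked.exists_sum_eq_weight (hT : T.IsTree) {r : V} {t : ℕ} {C : V → ℕ}
    (hC : IsBlocked T r t C) : ∃ D, IsBlocked T r t D ∧ ∑ v, D v = weight T r C := by
  classical
  induction hn : weight T r C - ∑ v, C v using Nat.strong_induction_on generalizing C with
  | _ n ih =>
    by_cases hleaves : ∀ p, branchHeight T r p ≠ 0 → C p = 0
    · refine ⟨C, hC, Finset.sum_congr rfl fun v _ => ?_⟩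
      by_cases hv : branchHeight T r v = 0
      · simp [hv]
      · simp [hleaves v hv]
    push Not at hleaves
    obtain ⟨p, hheight, hp⟩ := hleaves
    obtain ⟨c, hchild, hc⟩ := exists_isChild_branchHeight_eq hT.connected hheight
    obtain ⟨C', hmove⟩ := exists_isMove_to (Nat.one_le_iff_ne_zero.mpr hp) c
    have hsum := hmove.sum_add_one
    have hweight := hmove.weight_eq_of_branchHeight_eq hc
    have hle := sum_le_weight T r C'
    rw [← hweight]
    exact ih _ (by omega) ((hmove.isBlocked_iff hT hchild).mpr hC) rfl

/-- For `1 ≤ t`, the largest configuration that has fewer than `t` pebbles on the root and admits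
no pebbling step from any other vertex. -/
def saturated [DecidableEq V] (r : V) (t : ℕ) : V → ℕ :=
  Function.update 1 r (t - 1)

theorem isBlocked_saturated [DecidableEq V] (G : SimpleGraph V) (r : V) {t : ℕ} (ht : 1 ≤ t) :
    IsBlocked G r t (saturated r t) := by
  refine ⟨0, ?_, fun u hu => ?_⟩
  · simpa [saturated, childSum, Nat.succ_le_iff] using ht
  · simp [saturated, childSum, hu]

end Blocking

section PebblingNumber

variable {V : Type} {G T : SimpleGraph V}

theorem pebStep_iff [DecidableEq V] {C C' : V → ℕ} :
    PebStep G C C' ↔ ∃ u v, G.Adj u v ∧ IsMove u v C C' := by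
  refine exists₂_congr fun u v => and_congr_right fun huv => ?_
  refine ⟨fun ⟨_, hu, hv, hother⟩ => funext fun w => ?_, fun h => ?_⟩
  · by_cases hwu : w = u
    · subst hwu
      simpa [huv.ne] using hu
    by_cases hwv : w = v
    · subst hwv
      simpa [hwu] using hv
    · simpa [hwu, hwv] using hother w hwu hwv
  · have hu := h.apply_source huv.ne
    have hv : C' v = C v + 1 := by simpa [huv.ne'] using h.apply v
    exact ⟨by omega, hu, hv, fun w hwu hwv => by simpa [hwu, hwv] using h.apply w⟩

variable [Fintype V]

theorem exists_reachable_weight_le (hG : G.Connected) (r : V) (C : V → ℕ) :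
    ∃ D, Relation.ReflTransGen (PebStep G) C D ∧ (∀ u, u ≠ r → D u ≤ 1) ∧
      weight G r C ≤ weight G r D := by
  classical
  induction hn : ∑ v, C v using Nat.strong_induction_on generalizing C with
  | _ n ih =>
    by_cases hC : ∀ u, u ≠ r → C u ≤ 1
    · exact ⟨C, .refl, hC, le_rfl⟩
    push Not at hC
    obtain ⟨c, hcr, hc⟩ := hC
    obtain ⟨p, hp⟩ := exists_isChild hG hcr
    obtain ⟨C', hmove⟩ := exists_isMove_from hc p
    have hsum := hmove.sum_add_one
    obtain ⟨D, hD, hle, hweight⟩ := ih _ (by omega) C' rfl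
    exact ⟨D, .head (pebStep_iff.mpr ⟨c, p, hp.adj.symm, hmove⟩) hD, hle,
      (hmove.weight_le_of_isChild hG hp).trans hweight⟩

theorem tSolvable_of_weight_saturated_lt [DecidableEq V] (hG : G.Connected) {r : V} {t : ℕ}
    {C : V → ℕ} (hC : weight G r (saturated r t) < ∑ v, C v) : TSolvable G C r t := by
  obtain ⟨D, hD, hle, hweight⟩ := exists_reachable_weight_le hG r C
  refine ⟨D, hD, ?_⟩
  by_contra! hlt
  have hsat : D ≤ saturated r t := le_update_iff.mpr ⟨by omega, hle⟩
  exact hC.not_ge ((sum_le_weight G r C).trans (hweight.trans (weight_mono G r hsat)))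

theorem IsBlocked.pebStep (hT : T.IsTree) {r : V} {t : ℕ} {C C' : V → ℕ}
    (hC : IsBlocked T r t C) (h : PebStep T C C') : IsBlocked T r t C' := by
  classical
  obtain ⟨u, v, huv, hmove⟩ := pebStep_iff.mp h
  rcases isChild_or_isChild_of_adj hT r huv with hchild | hchild
  · -- Away from the root, `C'` lies below the configuration from which a step back leads to `C`.
    have hu := hmove.apply_source huv.ne
    obtain ⟨D, hD⟩ := exists_isMove_to (show 1 ≤ C u by omega) v
    refine ((hD.isBlocked_iff hT hchild).mpr hC).mono fun w => ?_
    have := hmove.apply w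
    have := hD.apply w
    change C' w ≤ D w
    omega
  · exact (hmove.isBlocked_iff hT hchild).mp hC

theorem IsBlocked.not_tSolvable (hT : T.IsTree) {r : V} {t : ℕ} {C : V → ℕ}
    (hC : IsBlocked T r t C) : ¬ TSolvable T C r t := by
  rintro ⟨D, hD, hle⟩
  obtain ⟨m, hroot, -⟩ : IsBlocked T r t D := by
    clear hle
    induction hD with
    | refl => exact hC
    | tail _ hstep ih => exact ih.pebStep hT hstep
  omega

theorem piT_eq_weight_saturated [DecidableEq V] (hT : T.IsTree) (r : V) {t : ℕ} (ht : 1 ≤ t) :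
    piT T r t = weight T r (saturated r t) + 1 := by
  have hsolvable : weight T r (saturated r t) + 1 ∈
      {s | ∀ C : V → ℕ, s ≤ ∑ᶠ v, C v → TSolvable T C r t} := fun C hC => by
    rw [finsum_eq_sum_of_fintype] at hC
    exact tSolvable_of_weight_saturated_lt hT.connected hC
  refine (Nat.sInf_le hsolvable).antisymm ?_
  obtain ⟨C, hC, hsum⟩ := (isBlocked_saturated T r ht).exists_sum_eq_weight hT
  by_contra! hlt
  refine hC.not_tSolvable hT (Nat.sInf_mem ⟨_, hsolvable⟩ C ?_)
  rw [finsum_eq_sum_of_fintype, hsum]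
  exact Nat.lt_succ_iff.mp hlt

theorem weight_saturated_add [DecidableEq V] (G : SimpleGraph V) (r : V) {t : ℕ} (ht : 1 ≤ t) :
    weight G r (saturated r t) + 2 * 2 ^ eccG G r =
      t * 2 ^ eccG G r + ∑ v, 2 ^ branchHeight G r v := by
  rw [← branchHeight_self]
  obtain ⟨s, rfl⟩ := Nat.exists_eq_add_of_le' ht
  have hsat : saturated r (s + 1) + Pi.single r 1 = 1 + s • Pi.single r 1 := funext fun v => by
    by_cases hv : v = r
    · subst hv
      simp [saturated, add_comm]
    · simp [saturated, hv]
  have hweight : weight G r (saturated r (s + 1)) + 2 ^ branchHeight G r r =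
      ∑ v, 2 ^ branchHeight G r v + s * 2 ^ branchHeight G r r := by
    simpa [weight, mul_add, Finset.sum_add_distrib, Pi.single_apply, mul_comm s]
      using congrArg (weight G r) hsat
  linarith

end PebblingNumber

section RootChange

variable {V : Type} [Fintype V] {T : SimpleGraph V}

/-- The part of the pebbling number of a tree that depends neither on the number of target pebbles
nor, directly, on the eccentricity of the root. If `a₁ ≥ ⋯ ≥ aₖ` are the lengths of a maximum
`r`-path partition, it is `∑_{i ≥ 2} 2 ^ aᵢ - k`. -/
noncomputable def excess (T : SimpleGraph V) (r : V) : ℤ :=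
  ∑ v, 2 ^ branchHeight T r v - 2 * 2 ^ eccG T r

theorem piT_eq_add_excess (hT : T.IsTree) (r : V) {t : ℕ} (ht : 1 ≤ t) :
    (piT T r t : ℤ) = t * 2 ^ eccG T r + excess T r + 1 := by
  classical
  have hweight := congrArg ((↑) : ℕ → ℤ) (weight_saturated_add T r ht)
  push_cast at hweight
  rw [piT_eq_weight_saturated hT r ht, excess]
  push_cast
  linarith

theorem excess_sub_excess_of_adj (hT : T.IsTree) {u v : V} (h : T.Adj u v) :
    excess T u - excess T v = (2 ^ eccG T v - 2 ^ branchHeight T v u)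
      - (2 ^ eccG T u - 2 ^ branchHeight T u v) := by
  have hsum := Fintype.sum_eq_add
    (f := fun w => (2 : ℤ) ^ branchHeight T u w - 2 ^ branchHeight T v w) u v h.ne
    fun w hw => by rw [branchHeight_eq_of_adj hT h hw.1 hw.2, sub_self]
  rw [Finset.sum_sub_distrib, branchHeight_self, branchHeight_self] at hsum
  simp only [excess]
  linarith

theorem excess_eq_of_branchHeight_eq (hT : T.IsTree) {u v : V} (h : T.Adj u v)
    (heq : branchHeight T u v = branchHeight T v u) : excess T u = excess T v := by
  have hsub := excess_sub_excess_of_adj hT h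
  rw [eccG_eq_max_of_adj hT h, eccG_eq_max_of_adj hT h.symm, heq] at hsub
  linarith

theorem excess_eq_add_of_branchHeight_lt (hT : T.IsTree) {u v : V} (h : T.Adj u v)
    (hlt : branchHeight T u v < branchHeight T v u) :
    excess T u = excess T v + 2 ^ branchHeight T u v := by
  have hsub := excess_sub_excess_of_adj hT h
  rw [eccG_eq_max_of_adj hT h, eccG_eq_max_of_adj hT h.symm, max_eq_right (by omega),
    max_eq_left hlt, pow_succ] at hsub
  linarith

theorem excess_le_of_branchHeight_le (hT : T.IsTree) {u v : V} (h : T.Adj u v)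
    (hle : branchHeight T u v ≤ branchHeight T v u) : excess T v ≤ excess T u := by
  rcases hle.eq_or_lt with heq | hlt
  · exact (excess_eq_of_branchHeight_eq hT h heq).ge
  · rw [excess_eq_add_of_branchHeight_lt hT h hlt]
    exact le_add_of_nonneg_right (by positivity)

theorem excess_le_excess_center (hT : T.IsTree) {c : V} (hc : ∀ v, eccG T c ≤ eccG T v) (v : V) :
    excess T v ≤ excess T c := by
  induction hn : T.dist c v generalizing v with
  | zero => rw [hT.connected.dist_eq_zero_iff.mp hn]
  | succ n ih =>
    have hvc : v ≠ c := by
      rintro rfl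
      simp at hn
    obtain ⟨u, hu⟩ := exists_isChild hT.connected hvc
    calc excess T v ≤ excess T u :=
          excess_le_of_branchHeight_le hT hu.adj (hu.branchHeight_le_of_eccG_le hT (hc v))
      _ ≤ excess T c := ih u (by have := hu.dist_eq; omega)

theorem excess_center_le (hT : T.IsTree) {c : V} (hc : ∀ v, eccG T c ≤ eccG T v) {s : V}
    (hs : eccG T c < eccG T s) : excess T c ≤ excess T s + 2 ^ (eccG T s - 2) := by
  induction hn : T.dist c s generalizing s with
  | zero =>
    obtain rfl := hT.connected.dist_eq_zero_iff.mp hn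
    exact absurd hs (lt_irrefl _)
  | succ n ih =>
    have hsc : s ≠ c := by
      rintro rfl
      exact hs.false
    obtain ⟨u, hu⟩ := exists_isChild hT.connected hsc
    have hlt := hu.branchHeight_lt_of_eccG_lt hT hs
    have hbelow := hu.branchHeight_lt_eccG hT
    have hecc_s := eccG_eq_max_of_adj hT hu.adj.symm
    have hecc_u := eccG_eq_max_of_adj hT hu.adj
    have hstep := excess_eq_add_of_branchHeight_lt hT hu.adj hlt
    rcases (hc u).eq_or_lt with hcentral | hcloser
    · have hu_center := excess_le_excess_center hT (fun v => hcentral ▸ hc v) c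
      have hpow : (2 : ℤ) ^ branchHeight T u s ≤ 2 ^ (eccG T s - 2) :=
        pow_le_pow_right₀ one_le_two (by omega)
      linarith
    · have hih := ih hcloser (by have := hu.dist_eq; omega)
      have hpow : (2 : ℤ) ^ branchHeight T u s ≤ 2 ^ (eccG T u - 2) :=
        pow_le_pow_right₀ one_le_two (by omega)
      have hdouble : (2 : ℤ) ^ (eccG T s - 2) = 2 ^ (eccG T u - 2) * 2 := by
        rw [← pow_succ]
        congr 1
        omega
      linarith

theorem excess_le_of_eccG_lt (hT : T.IsTree) {r s : V} (h : eccG T r < eccG T s) :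
    excess T r ≤ excess T s + 2 ^ (eccG T s - 2) := by
  have : Nonempty V := ⟨r⟩
  obtain ⟨c, hc⟩ := Finite.exists_min (eccG T)
  exact (excess_le_excess_center hT hc r).trans (excess_center_le hT hc ((hc r).trans_lt h))

end RootChange

end TreePebbling

open TreePebbling in
theorem tree_root_eccentricity_bound_general {V : Type} [Finite V] {T : SimpleGraph V}
    (hT : T.IsTree) {r s : V} (h : eccG T r < eccG T s) {t : ℕ} (ht : 1 ≤ t) :
    piT T r t + 2 ^ (eccG T s - 2) ≤ piT T s t := by
  have := Fintype.ofFinite V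
  have hexcess := excess_le_of_eccG_lt hT h
  obtain ⟨k, hk⟩ := Nat.exists_eq_add_of_le' (two_le_eccG_of_eccG_lt hT h)
  zify
  rw [piT_eq_add_excess hT r ht, piT_eq_add_excess hT s ht]
  rw [hk, Nat.add_sub_cancel] at hexcess ⊢
  have hpow : (2 : ℤ) ^ eccG T r ≤ 2 ^ (k + 1) := pow_le_pow_right₀ one_le_two (by omega)
  have ht' : (1 : ℤ) ≤ t := mod_cast ht
  calc t * 2 ^ eccG T r + excess T r + 1 + 2 ^ k
      ≤ t * 2 ^ (k + 1) + (excess T s + 2 ^ k) + 1 + 2 ^ k := by gcongr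
    _ = t * 2 ^ (k + 1) + 1 * 2 ^ (k + 1) + excess T s + 1 := by ring
    _ ≤ t * 2 ^ (k + 1) + t * 2 ^ (k + 1) + excess T s + 1 := by gcongr
    _ = t * 2 ^ (k + 2) + excess T s + 1 := by ring

/-- in a tree `T` of diameter `d`, if `ecc(r*) = d` and `ecc(r) < d`,
then `π_t(T,r) ≤ π_t(T,r*) − 2^{d−2}`. -/
theorem tree_root_eccentricity_bound {V : Type} [Fintype V] (T : SimpleGraph V)
    (hconn : T.Connected) (hac : T.IsAcyclic) (d : ℕ) (hd : d = diamG T)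
    (rstar r : V) (hstar : eccG T rstar = d) (hr : eccG T r < d)
    (t : ℕ) (ht : 1 ≤ t) :
    piT T r t + 2 ^ (d - 2) ≤ piT T rstar t := by
  subst hstar
  exact tree_root_eccentricity_bound_general ⟨hconn, hac⟩ hr ht
end
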